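/- arXiv:1503.02937 — 2 statements merged into one kernel-verified Lean document; each statement's English description precedes it below -/
import Mathlib

section
/- The maximum size of a 2-arc in the projective Hjelmslev plane over S = 𝔽₄[X]/(X²) is 18: there exists a set of 18 points of PHG(2,S) with at most 2 points on each line, but every multiset of 19 points of PHG(2,S) has a line containing at least 3 of its points counted with multiplicity. -/
/-- A point of a projective Hjelmslev geometry PHG(n-1, R): a free rank-1 submodule
of Rⁿ, i.e. the R-span of a vector having at least one unit coordinate. -/
def IsPoint {R : Type} [CommRing R] {n : ℕ} (P : Submodule R (Fin n → R)) : Prop :=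
  ∃ v : Fin n → R, (∃ i, IsUnit (v i)) ∧ P = Submodule.span R {v}

/-- A free rank-k submodule of Rⁿ: a submodule linearly isomorphic to Rᵏ. -/
def IsFreeRank {R : Type} [CommRing R] {n : ℕ} (k : ℕ) (L : Submodule R (Fin n → R)) : Prop :=
  Nonempty ((Fin k → R) ≃ₗ[R] L)

/-- A line of PHG(2, R): a free rank-2 submodule of R³. -/
abbrev IsLine {R : Type} [CommRing R] (L : Submodule R (Fin 3 → R)) : Prop := IsFreeRank 2 L

/-- The chain ring S = 𝔽₄[X]/(X²), the dual numbers over the field with 4 elements. -/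
abbrev S4 := DualNumber (GaloisField 2 2)

/-- A concrete model of the field with four elements: `0, 1, w, w + 1`. -/
inductive K4 : Type
  | o | i | w | v
  deriving DecidableEq

namespace K4

def add : K4 → K4 → K4
  | o, y => y
  | i, o => i | i, i => o | i, w => v | i, v => w
  | w, o => w | w, i => v | w, w => o | w, v => i
  | v, o => v | v, i => w | v, w => i | v, v => o

def mul : K4 → K4 → K4
  | o, _ => o
  | i, y => y
  | w, o => o | w, i => w | w, w => v | w, v => i
  | v, o => o | v, i => v | v, w => i | v, v => w

def inv : K4 → K4
  | o => o | i => i | w => v | v => w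

instance : Fintype K4 := ⟨{o, i, w, v}, by intro x; cases x <;> decide⟩

instance : Zero K4 := ⟨o⟩
instance : One K4 := ⟨i⟩
instance : Add K4 := ⟨add⟩
instance : Mul K4 := ⟨mul⟩
instance : Neg K4 := ⟨id⟩
instance : Inv K4 := ⟨inv⟩

instance : Field K4 where
  add_assoc := by decide
  zero_add := by decide
  add_zero := by decide
  add_comm := by decide
  mul_assoc := by decide
  one_mul := by decide
  mul_one := by decide
  mul_comm := by decide
  left_distrib := by decide
  right_distrib := by decide
  zero_mul := by decide
  mul_zero := by decide
  neg_add_cancel := by decide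
  exists_pair_ne := ⟨o, i, by decide⟩
  mul_inv_cancel := by decide
  inv_zero := rfl
  nsmul := nsmulRec
  zsmul := zsmulRec
  nnqsmul := _
  qsmul := _

theorem card : Fintype.card K4 = 4 := rfl

theorem two_eq : (2 : K4) = 0 := by decide

instance : CharP K4 2 := CharTwo.of_one_ne_zero_of_two_eq_zero one_ne_zero two_eq

theorem all_iff (p : K4 → Prop) : (∀ x, p x) ↔ p o ∧ p i ∧ p w ∧ p v :=
  ⟨fun h => ⟨h _, h _, h _, h _⟩, fun h x => by cases x <;> simp [h]⟩

/-- Sum over the four elements. -/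
def sm (f : K4 → K4) : K4 := f o + f i + f w + f v

end K4

theorem exists_iso : Nonempty (K4 ≃+* GaloisField 2 2) := by
  have : Fintype (GaloisField 2 2) := Fintype.ofFinite _
  have h : Fintype.card K4 = Fintype.card (GaloisField 2 2) := by
    rw [← Nat.card_eq_fintype_card (α := GaloisField 2 2), GaloisField.card 2 2 (by norm_num), K4.card]
    norm_num
  exact ⟨FiniteField.ringEquivOfCardEq h⟩

namespace K4

/-- The graph of `f` has no three points on a common non-vertical line. -/
def Arc4 (f : K4 → K4) : Prop :=
  ∀ α β x y z : K4, x ≠ y → x ≠ z → y ≠ z →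
    ¬ (f x = α + β * x ∧ f y = α + β * y ∧ f z = α + β * z)

/-- As `Arc4`, with an additional point at infinity of slope `t`. -/
def Arc5 (f : K4 → K4) (t : K4) : Prop :=
  Arc4 f ∧ ∀ α x y : K4, x ≠ y → ¬ (f x = α + t * x ∧ f y = α + t * y)

/-- Every function is a polynomial of degree at most three. -/
theorem interp (f : K4 → K4) : ∃ c0 c1 c2 c3 : K4, ∀ x, f x = c0 + c1 * x + c2 * x ^ 2 + c3 * x ^ 3 := by
  refine ⟨f o, f i + v * f w + w * f v, f i + w * f w + v * f v, f o + f i + f w + f v, ?_⟩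
  have key : ∀ a b c d : K4, ∀ x : K4, K4.rec a b c d x = a + (b + v * c + w * d) * x +
      (b + w * c + v * d) * x ^ 2 + (a + b + c + d) * x ^ 3 := by decide
  intro x
  rw [← key (f o) (f i) (f w) (f v) x]
  cases x <;> rfl

theorem poly_zero : ∀ c0 c1 c2 c3 : K4, (∀ x : K4, c0 + c1 * x + c2 * x ^ 2 + c3 * x ^ 3 = 0) →
    c0 = 0 ∧ c1 = 0 ∧ c2 = 0 ∧ c3 = 0 := by
  decide

theorem poly_zero' : ∀ c0 c1 c2 : K4, (∀ x : K4, x ≠ 0 → c0 + c1 * x + c2 * x ^ 2 = 0) →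
    c0 = 0 ∧ c1 = 0 ∧ c2 = 0 := by
  decide

theorem pow4 : ∀ x : K4, x ^ 4 = x := by decide

theorem pow3 : ∀ x : K4, x ≠ 0 → x ^ 3 = 1 := by decide

theorem arc4_poly (f : K4 → K4) (h : Arc4 f) :
    ∃ c0 c1 c2 : K4, c2 ≠ 0 ∧ ∀ x, f x = c0 + c1 * x + c2 * x ^ 2 := by
  obtain ⟨c0, c1, c2, c3, hf⟩ := interp f
  have key : ∀ c0 c1 c2 c3 : K4, (c3 = 0 ∧ c2 ≠ 0) ∨ ∃ α β x y z : K4, x ≠ y ∧ x ≠ z ∧ y ≠ z ∧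
      c0 + c1 * x + c2 * x ^ 2 + c3 * x ^ 3 = α + β * x ∧
      c0 + c1 * y + c2 * y ^ 2 + c3 * y ^ 3 = α + β * y ∧
      c0 + c1 * z + c2 * z ^ 2 + c3 * z ^ 3 = α + β * z := by
    have key' : ∀ c2 c3 : K4, (c3 = 0 ∧ c2 ≠ 0) ∨ ∃ α β x y z : K4, x ≠ y ∧ x ≠ z ∧ y ≠ z ∧
      c2 * x ^ 2 + c3 * x ^ 3 = α + β * x ∧
      c2 * y ^ 2 + c3 * y ^ 3 = α + β * y ∧
      c2 * z ^ 2 + c3 * z ^ 3 = α + β * z := by decide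
    intro c0 c1 c2 c3
    rcases key' c2 c3 with h | ⟨α, β, x, y, z, h1, h2, h3, h4, h5, h6⟩
    · exact Or.inl h
    · refine Or.inr ⟨α + c0, β + c1, x, y, z, h1, h2, h3, ?_, ?_, ?_⟩
      · linear_combination h4
      · linear_combination h5
      · linear_combination h6
  rcases key c0 c1 c2 c3 with ⟨h3, h2⟩ | ⟨α, β, x, y, z, h1, h2, h3, h4⟩
  · exact ⟨c0, c1, c2, h2, fun x => by rw [hf x, h3]; ring⟩
  · exact absurd ⟨by rw [hf, h4.1], by rw [hf, h4.2.1], by rw [hf, h4.2.2]⟩ (h α β x y z h1 h2 h3)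

theorem arc5_poly (f : K4 → K4) (t : K4) (h : Arc5 f t) :
    ∃ c0 c2 : K4, c2 ≠ 0 ∧ ∀ x, f x = c0 + t * x + c2 * x ^ 2 := by
  obtain ⟨c0, c1, c2, h2, hf⟩ := arc4_poly f h.1
  have key : ∀ c1 c2 t : K4, c1 = t ∨ c2 = 0 ∨ ∃ α x y : K4, x ≠ y ∧
      c1 * x + c2 * x ^ 2 = α + t * x ∧ c1 * y + c2 * y ^ 2 = α + t * y := by decide
  rcases key c1 c2 t with h | h' | ⟨α, x, y, h1, h4, h5⟩
  · exact ⟨c0, c2, h2, by rw [← h]; exact hf⟩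
  · exact absurd h' h2
  · refine absurd ⟨?_, ?_⟩ (h.2 (α + c0) x y h1)
    · rw [hf]; linear_combination h4
    · rw [hf]; linear_combination h5

/-- Conjunction over the four elements, as a Boolean. -/
def all (p : K4 → Bool) : Bool := p o && (p i && (p w && p v))

theorem all_spec {p : K4 → Bool} (h : all p = true) (x : K4) : p x = true := by
  simp only [all, Bool.and_eq_true] at h
  cases x <;> simp [h]

/-- Boolean test for zero. -/
def z : K4 → Bool
  | o => true
  | _ => false

theorem z_spec {x : K4} (h : z x = true) : x = 0 := by
  cases x <;> first | rfl | cases h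

/-- Fast cubic `p + q c + r c² + t c³` vanishes somewhere. -/
def anyz (p q r t : K4) : Bool :=
  z p || (z (add p (add q (add r t))) ||
    (z (add p (add (mul q w) (add (mul r v) t))) || z (add p (add (mul q v) (add (mul r w) t)))))

theorem anyz_spec {p q r t : K4} (h : anyz p q r t = true) : ∃ c : K4, p + q * c + r * c ^ 2 + t * c ^ 3 = 0 := by
  revert p q r t
  decide

/-- The final search: no Hermitian-type form in three variables over `𝔽₄` is anisotropic
(`T` is normalised to `1`). -/
theorem search : (all fun P => all fun Q => all fun R => anyz P Q R i || all fun U => all fun V => all fun W =>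
    anyz U V W i || all fun X => all fun Y =>
      anyz (add (add P U) (add X Y)) (add V Q) (add W R) i ||
      (anyz (add (add P U) (add (mul X w) (mul Y v))) (add V (mul v Q)) (add W (mul w R)) i ||
      anyz (add (add P U) (add (mul X v) (mul Y w))) (add V (mul w Q)) (add W (mul v R)) i)) = true := by
  decide +kernel

theorem search' (P Q R U V W X Y T : K4) (hT : T ≠ 0)
    (h1 : ∀ c, P + Q * c + R * c ^ 2 + T * c ^ 3 ≠ 0)
    (h2 : ∀ c, U + V * c + W * c ^ 2 + T * c ^ 3 ≠ 0)
    (h3 : ∀ m k, m ≠ 0 → X * m + Y * m ^ 2 + (P + U) + R * m * k ^ 2 + V * k + W * k ^ 2 + Q * m ^ 2 * k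
      + T * k ^ 3 ≠ 0) : False := by
  have hi : T⁻¹ * T = 1 := inv_mul_cancel₀ hT
  have hs := search
  have hs := all_spec (all_spec (all_spec hs (T⁻¹ * P)) (T⁻¹ * Q)) (T⁻¹ * R)
  rw [Bool.or_eq_true] at hs
  rcases hs with hs | hs
  · obtain ⟨c, hc⟩ := anyz_spec hs
    apply h1 c
    have : T * (T⁻¹ * P + T⁻¹ * Q * c + T⁻¹ * R * c ^ 2 + 1 * c ^ 3) = 0 := by
      rw [show (1 : K4) = i from rfl, hc, mul_zero]
    linear_combination this - (P + Q * c + R * c^2) * hi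
  have hs := all_spec (all_spec (all_spec hs (T⁻¹ * U)) (T⁻¹ * V)) (T⁻¹ * W)
  rw [Bool.or_eq_true] at hs
  rcases hs with hs | hs
  · obtain ⟨c, hc⟩ := anyz_spec hs
    apply h2 c
    have : T * (T⁻¹ * U + T⁻¹ * V * c + T⁻¹ * W * c ^ 2 + 1 * c ^ 3) = 0 := by
      rw [show (1 : K4) = i from rfl, hc, mul_zero]
    linear_combination this - (U + V * c + W * c^2) * hi
  have hs := all_spec (all_spec hs (T⁻¹ * X)) (T⁻¹ * Y)
  have fin : ∀ m k : K4, m ≠ 0 → (T⁻¹ * P + T⁻¹ * U + (T⁻¹ * X * m + T⁻¹ * Y * m ^ 2)) +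
      (T⁻¹ * V + m ^ 2 * (T⁻¹ * Q)) * k + (T⁻¹ * W + m * (T⁻¹ * R)) * k ^ 2 + 1 * k ^ 3 = 0 → False := by
    intro m k hm h
    apply h3 m k hm
    linear_combination T * h - (X * m + Y * m ^ 2 + (P + U) + R * m * k ^ 2 + V * k + W * k ^ 2 + Q * m ^ 2 * k) * hi
  rw [Bool.or_eq_true, Bool.or_eq_true] at hs
  rcases hs with hs | hs | hs
  · obtain ⟨k, hk⟩ := anyz_spec hs
    refine fin i k (by decide) (Eq.trans ?_ hk)
    change _ = (T⁻¹ * P + T⁻¹ * U + (T⁻¹ * X + T⁻¹ * Y)) + (T⁻¹ * V + T⁻¹ * Q) * k +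
      (T⁻¹ * W + T⁻¹ * R) * k ^ 2 + 1 * k ^ 3
    rw [show i = (1 : K4) from rfl]
    ring
  · obtain ⟨k, hk⟩ := anyz_spec hs
    refine fin w k (by decide) (Eq.trans ?_ hk)
    rw [show w ^ 2 = v by decide]
    rfl
  · obtain ⟨k, hk⟩ := anyz_spec hs
    refine fin v k (by decide) (Eq.trans ?_ hk)
    rw [show v ^ 2 = w by decide]
    rfl

theorem core (a b : K4 → K4 → K4) (c d : K4 → K4)
    (h1 : ∀ x, Arc4 (a x)) (h2 : ∀ y, Arc4 (fun x => b x y))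
    (h3 : ∀ m k, m ≠ 0 → Arc5 (fun x => b x (m * x + k) + m * a x (m * x + k)) (c m + k * d m))
    (h4 : ∀ α β : K4, ¬ ∀ m : K4, m ≠ 0 → d m = α + β * m) : False := by
  choose a0 a1 a2 ha2 ha using fun x => arc4_poly _ (h1 x)
  choose b0 b1 b2 hb2 hb using fun y => arc4_poly _ (h2 y)
  obtain ⟨a00, a10, a20, a30, e0⟩ := interp a0
  obtain ⟨a01, a11, a21, a31, e1⟩ := interp a1
  obtain ⟨a02, a12, a22, a32, e2⟩ := interp a2
  obtain ⟨b00, b01, b02, b03, g0⟩ := interp b0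
  obtain ⟨b10, b11, b12, b13, g1⟩ := interp b1
  obtain ⟨b20, b21, b22, b23, g2⟩ := interp b2
  have main : ∀ m k : K4, m ≠ 0 →
      (b03 + m ^ 2 * b12 + m ^ 2 * k * b13 + m * b21 + m * k ^ 2 * b23 + m * a30 + m * k * a31 +
        m * k ^ 2 * a32 + m ^ 2 * a21 + a12 = 0) ∧
      (m * (a10 + m * a31 + m ^ 2 * a22 + k * a11 + k ^ 2 * a12 + m * a01) + b10 + b11 * k + b12 * k ^ 2 +
        b13 * (k ^ 3 + 1) + b22 * m ^ 2 + b01 * m + b03 * m * k ^ 2 + b23 * m ^ 2 * k = c m + k * d m) ∧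
      (m * (a20 + a21 * k + a22 * k ^ 2 + a11 * m + a32 * m ^ 2 + a02 * m ^ 2) + b20 + b21 * k + b22 * k ^ 2
        + b11 * m + b13 * m * k ^ 2 + b02 * m ^ 2 + b03 * m ^ 2 * k + b23 * (1 + k ^ 3) ≠ 0) := by
    intro m k hm
    obtain ⟨c0, c2, hc, hf⟩ := arc5_poly _ _ (h3 m k hm)
    have hm3 := pow3 m hm
    have t2 := two_eq
    have := poly_zero
      ((m * (a00 + a01 * k + a02 * k ^ 2) + b00 + b01 * k + b02 * k ^ 2 + b03 * k ^ 3) - c0)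
      ((m * (a10 + m * a31 + m ^ 2 * a22 + k * a11 + k ^ 2 * a12 + m * a01) + b10 + b11 * k + b12 * k ^ 2 +
        b13 * (k ^ 3 + 1) + b22 * m ^ 2 + b01 * m + b03 * m * k ^ 2 + b23 * m ^ 2 * k) - (c m + k * d m))
      ((m * (a20 + a21 * k + a22 * k ^ 2 + a11 * m + a32 * m ^ 2 + a02 * m ^ 2) + b20 + b21 * k + b22 * k ^ 2
        + b11 * m + b13 * m * k ^ 2 + b02 * m ^ 2 + b03 * m ^ 2 * k + b23 * (1 + k ^ 3)) - c2)
      (b03 + m ^ 2 * b12 + m ^ 2 * k * b13 + m * b21 + m * k ^ 2 * b23 + m * a30 + m * k * a31 +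
        m * k ^ 2 * a32 + m ^ 2 * a21 + a12)
      (by
        intro x
        have h := hf x
        simp only [ha, hb, e0, e1, e2, g0, g1, g2] at h
        have hx := pow4 x
        clear hf ha hb e0 e1 e2 g0 g1 g2 h1 h2 h3 h4 ha2 hb2
        generalize c m = cm at *
        generalize d m = dm at *
        grind)
    obtain ⟨-, q1, q2, q3⟩ := this
    refine ⟨q3, sub_eq_zero.mp q1, ?_⟩
    rw [sub_eq_zero.mp q2]
    exact hc
  have hk : ∀ m : K4, m ≠ 0 → (b03 + a12 + (b21 + a30) * m + (b12 + a21) * m ^ 2 = 0) ∧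
      (0 + a31 * m + b13 * m ^ 2 = 0) ∧ (0 + (b23 + a32) * m + 0 * m ^ 2 = 0) := by
    intro m hm
    have := poly_zero (b03 + a12 + (b21 + a30) * m + (b12 + a21) * m ^ 2)
      (0 + a31 * m + b13 * m ^ 2) (0 + (b23 + a32) * m + 0 * m ^ 2) 0
      (fun k => by linear_combination (main m k hm).1)
    exact ⟨this.1, this.2.1, this.2.2.1⟩
  obtain ⟨r1, r2, r3⟩ := poly_zero' _ _ _ fun m hm => (hk m hm).1
  obtain ⟨-, r4, r5⟩ := poly_zero' _ _ _ fun m hm => (hk m hm).2.1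
  obtain ⟨-, r6, -⟩ := poly_zero' _ _ _ fun m hm => (hk m hm).2.2
  have hl : ∀ m : K4, m ≠ 0 → b11 + a11 * m + b23 * m ^ 2 = d m ∧ b12 + (a12 + b03) * m = 0 := by
    intro m hm
    have := poly_zero (m * (a10 + m * a31 + m ^ 2 * a22 + m * a01) + b10 + b13 + b22 * m ^ 2 + b01 * m - c m)
      (b11 + a11 * m + b23 * m ^ 2 - d m) (b12 + (a12 + b03) * m) b13
      (fun k => by linear_combination (main m k hm).2.1)
    exact ⟨sub_eq_zero.mp this.2.1, this.2.2.1⟩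
  have r7 : b12 = 0 := by
    have := (hl 1 one_ne_zero).2
    linear_combination this - r1
  have hT : b23 ≠ 0 := by
    intro h0
    apply h4 b11 a11
    intro m hm
    rw [← (hl m hm).1, h0]; ring
  have t2 := two_eq
  refine search' a02 a12 a22 b20 b21 b22 (a20 + b11) (a11 + b02) b23 hT ?_ ?_ ?_
  · intro x h
    apply ha2 x
    rw [e2]
    linear_combination h + (r6 - b23 * t2) * x ^ 3
  · intro y
    rw [← g2]
    exact hb2 y
  · intro m k hm h
    apply (main m k hm).2.2
    have hm3 := pow3 m hm
    clear main hk hl h1 h2 h3 h4 ha2 hb2 ha hb e0 e1 e2 g0 g1 g2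
    grind

end K4

namespace K4

open Matrix

/-- The point `p + ε w` lies on the line with equation `m + ε n`. -/
def On (m n p w : Fin 3 → K4) : Prop := m ⬝ᵥ p = 0 ∧ m ⬝ᵥ w + n ⬝ᵥ p = 0

/-- A family of points `p + ε w` with no three on a line. -/
def Good {ι : Type} (p w : ι → Fin 3 → K4) : Prop :=
  ∀ s t u, s ≠ t → s ≠ u → t ≠ u → ∀ m n, m ≠ 0 →
    ¬ (On m n (p s) (w s) ∧ On m n (p t) (w t) ∧ On m n (p u) (w u))

/-- Representatives of the 19 points of the projective plane other than two. -/
def rep : (K4 × K4) ⊕ K4ˣ → Fin 3 → K4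
  | Sum.inl q => ![q.1, q.2, 1]
  | Sum.inr m => ![1, m, 0]

theorem add_self (x : K4) : x + x = 0 := CharTwo.add_self_eq_zero x

theorem core2 (W : (K4 × K4) ⊕ K4ˣ → Fin 3 → K4) (h : Good rep W) : False := by
  have t2 := two_eq
  refine core (fun x y => W (Sum.inl (x, y)) 0 + x * W (Sum.inl (x, y)) 2)
    (fun x y => W (Sum.inl (x, y)) 1 + y * W (Sum.inl (x, y)) 2)
    (fun m => if hm : m ≠ 0 then m * W (Sum.inr (Units.mk0 m hm)) 0 + W (Sum.inr (Units.mk0 m hm)) 1 else 0)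
    (fun m => if hm : m ≠ 0 then W (Sum.inr (Units.mk0 m hm)) 2 else 0) ?_ ?_ ?_ ?_
  · intro x α β y1 y2 y3 h12 h13 h23 ⟨e1, e2, e3⟩
    refine h (Sum.inl (x, y1)) (Sum.inl (x, y2)) (Sum.inl (x, y3)) (by simpa using h12) (by simpa using h13)
      (by simpa using h23) ![1, 0, x] ![0, β, α] (fun h => by simpa using congrFun h 0) ?_
    simp only [On, rep, dotProduct, Fin.sum_univ_three, cons_val]
    refine ⟨⟨?_, ?_⟩, ⟨?_, ?_⟩, ⟨?_, ?_⟩⟩ <;> grind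
  · intro x α β y1 y2 y3 h12 h13 h23 ⟨e1, e2, e3⟩
    refine h (Sum.inl (y1, x)) (Sum.inl (y2, x)) (Sum.inl (y3, x)) (by simpa using h12) (by simpa using h13)
      (by simpa using h23) ![0, 1, x] ![β, 0, α] (fun h => by simpa using congrFun h 1) ?_
    simp only [On, rep, dotProduct, Fin.sum_univ_three, cons_val]
    refine ⟨⟨?_, ?_⟩, ⟨?_, ?_⟩, ⟨?_, ?_⟩⟩ <;> grind
  · intro m k hm
    refine ⟨?_, ?_⟩
    · intro α β y1 y2 y3 h12 h13 h23 ⟨e1, e2, e3⟩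
      refine h (Sum.inl (y1, m * y1 + k)) (Sum.inl (y2, m * y2 + k)) (Sum.inl (y3, m * y3 + k))
        (fun h => h12 (congrArg Prod.fst (Sum.inl.inj h)))
        (fun h => h13 (congrArg Prod.fst (Sum.inl.inj h)))
        (fun h => h23 (congrArg Prod.fst (Sum.inl.inj h))) ![m, 1, k] ![β, 0, α]
        (fun h => by simpa using congrFun h 1) ?_
      simp only [On, rep, dotProduct, Fin.sum_univ_three, cons_val]
      refine ⟨⟨?_, ?_⟩, ⟨?_, ?_⟩, ⟨?_, ?_⟩⟩ <;> grind
    · intro α y1 y2 h12 ⟨e1, e2⟩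
      simp only [dif_pos hm] at e1 e2
      set cc := W (Sum.inr (Units.mk0 m hm)) with hcc
      refine h (Sum.inl (y1, m * y1 + k)) (Sum.inl (y2, m * y2 + k)) (Sum.inr (Units.mk0 m hm))
        (fun h => h12 (congrArg Prod.fst (Sum.inl.inj h))) (by simp) (by simp)
        ![m, 1, k] ![m * cc 0 + cc 1 + k * cc 2, 0, α]
        (fun h => by simpa using congrFun h 1) ?_
      simp only [On, rep, dotProduct, Fin.sum_univ_three, cons_val, ← hcc, Units.val_mk0]
      refine ⟨⟨?_, ?_⟩, ⟨?_, ?_⟩, ⟨?_, ?_⟩⟩ <;> grind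
  · intro α β hd
    have e1 := hd i (by decide)
    have e2 := hd w (by decide)
    have e3 := hd v (by decide)
    rw [dif_pos (by decide)] at e1 e2 e3
    refine h (Sum.inr (Units.mk0 i (by decide))) (Sum.inr (Units.mk0 w (by decide)))
      (Sum.inr (Units.mk0 v (by decide))) (fun h => ?_) (fun h => ?_) (fun h => ?_)
      ![0, 0, 1] ![α, β, 0] (fun h => by simpa using congrFun h 2) ?_
    · exact absurd (congrArg Units.val (Sum.inr.inj h)) (by decide)
    · exact absurd (congrArg Units.val (Sum.inr.inj h)) (by decide)
    · exact absurd (congrArg Units.val (Sum.inr.inj h)) (by decide)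
    simp only [On, rep, dotProduct, Fin.sum_univ_three, cons_val, Units.val_mk0]
    refine ⟨⟨?_, ?_⟩, ⟨?_, ?_⟩, ⟨?_, ?_⟩⟩ <;> grind

/-- Cross product. -/
def cr (a b : Fin 3 → K4) : Fin 3 → K4 :=
  ![a 1 * b 2 + a 2 * b 1, a 2 * b 0 + a 0 * b 2, a 0 * b 1 + a 1 * b 0]

theorem prop_of_cr (a b : Fin 3 → K4) (ha : a ≠ 0) (h : cr a b = 0) : ∃ r : K4, b = r • a := by
  have h0 := congrFun h 0
  have h1 := congrFun h 1
  have h2 := congrFun h 2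
  have t2 := two_eq
  simp only [cr, cons_val, Pi.zero_apply] at h0 h1 h2
  obtain ⟨s, hs⟩ := Function.ne_iff.mp ha
  refine ⟨b s * (a s)⁻¹, ?_⟩
  have hi := mul_inv_cancel₀ hs
  ext t
  simp only [Pi.smul_apply, smul_eq_mul]
  fin_cases s <;> fin_cases t <;> simp only [Fin.zero_eta, Fin.mk_one, Fin.reduceFinMk, Pi.zero_apply] at * <;> grind

theorem exists_trans (a b : Fin 3 → K4) (h : cr a b ≠ 0) :
    ∃ A B : Matrix (Fin 3) (Fin 3) K4, A * B = 1 ∧ B * A = 1 ∧ B *ᵥ ![1, 0, 0] = a ∧ B *ᵥ ![0, 1, 0] = b := by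
  obtain ⟨s, hs⟩ := Function.ne_iff.mp h
  let e : Fin 3 → K4 := Pi.single s 1
  let B : Matrix (Fin 3) (Fin 3) K4 := Matrix.of fun x => ![a x, b x, e x]
  have hB : B.det = cr a b s := by
    have t2 := two_eq
    rw [det_fin_three]
    simp only [B, e, cr, of_apply, cons_val]
    fin_cases s <;> simp <;> grind
  have hu : IsUnit B.det := by rw [hB]; exact isUnit_iff_ne_zero.mpr hs
  refine ⟨B⁻¹, B, nonsing_inv_mul _ hu, mul_nonsing_inv _ hu, ?_, ?_⟩
  · ext x; simp [B, mulVec, dotProduct, Fin.sum_univ_three]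
  · ext x; simp [B, mulVec, dotProduct, Fin.sum_univ_three]

theorem exists_cr (a : Fin 3 → K4) (ha : a ≠ 0) : ∃ b, cr a b ≠ 0 := by
  obtain ⟨s, hs⟩ := Function.ne_iff.mp ha
  simp only [Pi.zero_apply] at hs
  fin_cases s
  · exact ⟨![0, 1, 0], fun h => hs (by simpa [cr] using congrFun h 2)⟩
  · exact ⟨![0, 0, 1], fun h => hs (by simpa [cr] using congrFun h 0)⟩
  · exact ⟨![1, 0, 0], fun h => hs (by simpa [cr] using congrFun h 1)⟩

theorem On.smul {m n p w : Fin 3 → K4} (r : K4) (h : On m n p w) : On m n (r • p) (r • w) := by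
  simp only [On, dotProduct_smul, smul_eq_mul] at *
  exact ⟨by rw [h.1, mul_zero], by rw [← mul_add, h.2, mul_zero]⟩

theorem on_mulVec {A : Matrix (Fin 3) (Fin 3) K4} {m n p w : Fin 3 → K4} :
    On m n (A *ᵥ p) (A *ᵥ w) ↔ On (m ᵥ* A) (n ᵥ* A) p w := by
  simp only [On, dotProduct_mulVec]

theorem Good.trans {ι : Type} {p w : ι → Fin 3 → K4} (h : Good p w) {A B : Matrix (Fin 3) (Fin 3) K4}
    (hAB : A * B = 1) : Good (fun s => A *ᵥ p s) (fun s => A *ᵥ w s) := by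
  intro s t u h1 h2 h3 m n hm ⟨a1, a2, a3⟩
  refine h s t u h1 h2 h3 (m ᵥ* A) (n ᵥ* A) ?_ ⟨on_mulVec.mp a1, on_mulVec.mp a2, on_mulVec.mp a3⟩
  intro h0
  apply hm
  rw [← vecMul_one m, ← hAB, ← vecMul_vecMul, h0, zero_vecMul]

theorem Good.reindex {ι κ : Type} {p w : ι → Fin 3 → K4} (h : Good p w) (f : κ → ι) (hf : Function.Injective f)
    (r : κ → K4) (hr : ∀ s, r s ≠ 0) : Good (fun s => r s • p (f s)) (fun s => r s • w (f s)) := by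
  have key : ∀ m n s, On m n (r s • p (f s)) (r s • w (f s)) → On m n (p (f s)) (w (f s)) := by
    intro m n s h
    have := h.smul (r s)⁻¹
    rwa [smul_smul, smul_smul, inv_mul_cancel₀ (hr s), one_smul, one_smul] at this
  intro s t u h1 h2 h3 m n hm ⟨a1, a2, a3⟩
  exact h (f s) (f t) (f u) (hf.ne h1) (hf.ne h2) (hf.ne h3) m n hm ⟨key _ _ _ a1, key _ _ _ a2, key _ _ _ a3⟩

/-- The twenty lines through a point, in coordinates `(m₁, m₂, n₁, n₂)`. -/
def ln : K4 × Option K4 → K4 × K4 × K4 × K4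
  | (r, some s) => (1, s, 0, r)
  | (r, none) => (0, 1, r, 0)

theorem ln_ne (t : K4 × Option K4) : ¬ ((ln t).1 = 0 ∧ (ln t).2.1 = 0) := by
  revert t; decide

theorem exists_ln : ∀ y z a b : K4, ∃ t, (ln t).1 * y + (ln t).2.1 * z = 0 ∧
    (ln t).1 * a + (ln t).2.1 * b + (ln t).2.2.1 * y + (ln t).2.2.2 * z = 0 := by
  decide +kernel

theorem exists_ln' : ∀ a b : K4, ∃ s, ∀ r, (ln (r, s)).1 * a + (ln (r, s)).2.1 * b = 0 := by
  decide +kernel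

theorem nonneighbor0 {p w : Fin 19 → Fin 3 → K4} (h : Good p w) (s t : Fin 19) (hst : s ≠ t) (r : K4)
    (hs : p s = ![1, 0, 0]) (ht : p t = r • p s) : False := by
  have t2 := two_eq
  let m : K4 × Option K4 → Fin 3 → K4 := fun l => ![0, (ln l).1, (ln l).2.1]
  let n : K4 × Option K4 → Fin 3 → K4 := fun l =>
    ![(ln l).1 * w s 1 + (ln l).2.1 * w s 2, (ln l).2.2.1, (ln l).2.2.2]
  have hm : ∀ l, m l ≠ 0 := fun l h0 =>
    ln_ne l ⟨by simpa [m] using congrFun h0 1, by simpa [m] using congrFun h0 2⟩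
  have hons : ∀ l, On (m l) (n l) (p s) (w s) := by
    intro l
    simp only [On, m, n, hs, dotProduct, Fin.sum_univ_three, cons_val]
    constructor <;> grind
  have hon : ∀ l u, (ln l).1 * p u 1 + (ln l).2.1 * p u 2 = 0 →
      (ln l).1 * (w u 1 + w s 1 * p u 0) + (ln l).2.1 * (w u 2 + w s 2 * p u 0) + (ln l).2.2.1 * p u 1 +
        (ln l).2.2.2 * p u 2 = 0 → On (m l) (n l) (p u) (w u) := by
    intro l u h1 h2
    simp only [On, m, n, dotProduct, Fin.sum_univ_three, cons_val]
    constructor <;> grind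
  have hex : ∀ u, ∃ l, On (m l) (n l) (p u) (w u) := by
    intro u
    obtain ⟨l, h1, h2⟩ := exists_ln (p u 1) (p u 2) (w u 1 + w s 1 * p u 0) (w u 2 + w s 2 * p u 0)
    exact ⟨l, hon l u h1 h2⟩
  obtain ⟨s0, hs0⟩ : ∃ s0, ∀ r, On (m (r, s0)) (n (r, s0)) (p t) (w t) := by
    obtain ⟨s0, h0⟩ := exists_ln' (w t 1 + w s 1 * p t 0) (w t 2 + w s 2 * p t 0)
    have p1 : p t 1 = 0 := by simp [ht, hs]
    have p2 : p t 2 = 0 := by simp [ht, hs]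
    refine ⟨s0, fun r => hon _ _ (by simp [p1, p2]) ?_⟩
    rw [h0 r, p1, p2]; simp
  choose τ hτ using hex
  have hcard := Finset.card_le_card_of_injOn (s := (Finset.univ.erase s).erase t)
    (t := Finset.univ.filter fun l : K4 × Option K4 => l.2 ≠ s0) τ ?_ ?_
  · rw [Finset.card_erase_of_mem (by simp [hst.symm]), Finset.card_erase_of_mem (by simp)] at hcard
    have : ∀ s0 : Option K4, (Finset.univ.filter fun l : K4 × Option K4 => l.2 ≠ s0).card = 16 := by decide
    rw [this] at hcard
    simp at hcard
  · intro u hu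
    simp only [Finset.coe_erase, Finset.coe_univ, Set.mem_sdiff, Set.mem_univ, Set.mem_singleton_iff, true_and] at hu
    simp only [Finset.coe_filter, Finset.mem_univ, true_and, Set.mem_ofPred_eq]
    intro h0
    have : τ u = ((τ u).1, s0) := by rw [← h0]
    refine h s t u hst (Ne.symm hu.1) (Ne.symm hu.2) _ _ (hm (τ u)) ⟨hons _, ?_, hτ u⟩
    rw [this]
    exact hs0 _
  · intro u hu u' hu' he
    simp only [Finset.coe_erase, Finset.coe_univ, Set.mem_sdiff, Set.mem_univ, Set.mem_singleton_iff, true_and] at hu hu'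
    by_contra hne
    refine h s u u' (Ne.symm hu.1) (Ne.symm hu'.1) hne _ _ (hm (τ u)) ⟨hons _, hτ u, ?_⟩
    rw [he]
    exact hτ u'

theorem nonneighbor {p w : Fin 19 → Fin 3 → K4} (h : Good p w) (hp : ∀ s, p s ≠ 0) (s t : Fin 19) (hst : s ≠ t)
    (r : K4) (ht : p t = r • p s) : False := by
  obtain ⟨b, hb⟩ := exists_cr _ (hp s)
  obtain ⟨A, B, hAB, -, h1, -⟩ := exists_trans _ _ hb
  refine nonneighbor0 (h.trans hAB) s t hst r ?_ ?_
  · rw [← h1, mulVec_mulVec, hAB, one_mulVec]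
  · simp only [ht, mulVec_smul]

end K4

namespace K4

open Matrix

/-- Normalised representatives of the 21 points of the projective plane over `𝔽₄`. -/
def crep : Option (K4 × Option K4) → Fin 3 → K4
  | some (x, some y) => ![x, y, 1]
  | some (m, none) => ![1, m, 0]
  | none => ![0, 1, 0]

theorem exists_norm (p : Fin 3 → K4) (hp : p ≠ 0) : ∃ c, ∃ r : K4, r ≠ 0 ∧ r • p = crep c := by
  by_cases h2 : p 2 = 0
  · by_cases h0 : p 0 = 0
    · have h1 : p 1 ≠ 0 := by
        intro h1
        apply hp
        ext s; fin_cases s <;> assumption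
      refine ⟨none, (p 1)⁻¹, inv_ne_zero h1, ?_⟩
      ext s; fin_cases s <;> simp [crep, h0, h1, h2]
    · refine ⟨some ((p 0)⁻¹ * p 1, none), (p 0)⁻¹, inv_ne_zero h0, ?_⟩
      ext s; fin_cases s <;> simp [crep, h0, h2]
  · refine ⟨some ((p 2)⁻¹ * p 0, some ((p 2)⁻¹ * p 1)), (p 2)⁻¹, inv_ne_zero h2, ?_⟩
    ext s; fin_cases s <;> simp [crep, h2]

theorem crep_cr : ∀ c c', c ≠ c' → cr (crep c) (crep c') ≠ 0 := by
  decide +kernel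

theorem crep_ne (c) : crep c ≠ 0 := by
  revert c; decide +kernel

theorem cr_smul_self (a : Fin 3 → K4) (r s : K4) : cr (r • a) (s • a) = 0 := by
  have t2 := two_eq
  ext t
  fin_cases t <;> simp [cr] <;> grind

theorem rep_ne (t) : rep t ≠ 0 := by
  intro h
  rcases t with t | t
  · simpa [rep] using congrFun h 2
  · simpa [rep] using congrFun h 0

theorem rep_inj (s t) (r r' : K4) (hr : r ≠ 0) (hr' : r' ≠ 0) (h : r • rep s = r' • rep t) : s = t := by
  have h0 := congrFun h 0
  have h1 := congrFun h 1
  have h2 := congrFun h 2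
  rcases s with s | s <;> rcases t with t | t <;> simp [rep, hr, hr'.symm] at h0 h1 h2
  · subst h2
    simp only [mul_right_inj' hr] at h0 h1
    rw [Prod.ext h0 h1]
  · subst h0
    simp only [mul_right_inj' hr] at h1
    rw [Units.ext h1]

theorem no19 (p w : Fin 19 → Fin 3 → K4) (hp : ∀ s, p s ≠ 0) (h : Good p w) : False := by
  choose κ ρ hρ hκ using fun s => exists_norm (p s) (hp s)
  have hinj : Function.Injective κ := by
    intro s t hst
    by_contra hne
    refine nonneighbor h hp s t hne ((ρ t)⁻¹ * ρ s) ?_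
    rw [mul_smul, hκ s, hst, ← hκ t, smul_smul, inv_mul_cancel₀ (hρ t), one_smul]
  have hc : ((Finset.univ.image κ)ᶜ).card = 2 := by
    rw [Finset.card_compl, Finset.card_image_of_injective _ hinj]
    decide
  obtain ⟨c1, c2, h12, hcc⟩ := Finset.card_eq_two.mp hc
  have hmem : ∀ c, c ≠ c1 → c ≠ c2 → ∃ s, κ s = c := by
    intro c n1 n2
    have : c ∉ (Finset.univ.image κ)ᶜ := by rw [hcc]; simp [n1, n2]
    simpa using this
  obtain ⟨A, B, hAB, hBA, hB1, hB2⟩ := exists_trans _ _ (crep_cr c1 c2 h12)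
  have hg := h.trans hAB
  have hex : ∀ t, ∃ s, ∃ r : K4, r ≠ 0 ∧ r • (A *ᵥ p s) = rep t := by
    intro t
    have hne : B *ᵥ rep t ≠ 0 := by
      intro h0
      apply rep_ne t
      rw [← one_mulVec (rep t), ← hAB, ← mulVec_mulVec, h0, mulVec_zero]
    obtain ⟨c, μ, hμ, hc⟩ := exists_norm _ hne
    have hback : ∀ e : Fin 3 → K4, B *ᵥ e = crep c → μ • rep t = e := by
      intro e he
      rw [← he, ← mulVec_smul] at hc
      have := congrArg (fun x => A *ᵥ x) hc
      simpa only [mulVec_mulVec, hAB, one_mulVec] using this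
    obtain ⟨s, hs⟩ := hmem c
      (by
        rintro rfl
        have := hback _ hB1
        rcases t with t | t
        · exact hμ (by simpa [rep] using congrFun this 2)
        · have := congrFun this 1
          simp [rep, hμ] at this)
      (by
        rintro rfl
        have := hback _ hB2
        rcases t with t | t
        · exact hμ (by simpa [rep] using congrFun this 2)
        · have := congrFun this 0
          simp [rep, hμ] at this)
    refine ⟨s, μ⁻¹ * ρ s, mul_ne_zero (inv_ne_zero hμ) (hρ s), ?_⟩
    rw [mul_smul, ← mulVec_smul, hκ s, hs, ← hc, mulVec_smul, mulVec_mulVec, hAB, one_mulVec, smul_smul,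
      inv_mul_cancel₀ hμ, one_smul]
  choose f r hr hf using hex
  have hfi : Function.Injective f := by
    intro s t hst
    refine rep_inj s t (r t) (r s) (hr t) (hr s) ?_
    rw [← hf s, ← hf t, hst, smul_smul, smul_smul, mul_comm]
  have := hg.reindex f hfi r hr
  simp only [hf] at this
  exact core2 _ this

end K4

open Matrix in
theorem isLine_ker (l : Fin 3 → S4) (s : Fin 3) (hs : IsUnit (l s)) :
    IsLine (LinearMap.ker (Fintype.linearCombination S4 l)) := by
  obtain ⟨c, hc⟩ := hs.exists_right_inv
  have hmem : ∀ x : Fin 3 → S4, x ∈ LinearMap.ker (Fintype.linearCombination S4 l) ↔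
      x s * l s + ∑ t, x (s.succAbove t) * l (s.succAbove t) = 0 := by
    intro x
    rw [LinearMap.mem_ker, Fintype.linearCombination_apply, Fin.sum_univ_succAbove _ s]
    simp only [smul_eq_mul]
  refine ⟨LinearEquiv.ofBijective (LinearMap.codRestrict _
    ({ toFun := fun u => s.insertNth (-(c * ∑ t, u t * l (s.succAbove t))) u
       map_add' := ?_
       map_smul' := ?_ } : (Fin 2 → S4) →ₗ[S4] (Fin 3 → S4)) ?_) ⟨?_, ?_⟩⟩
  · intro u u'
    ext t : 1
    refine Fin.succAboveCases s ?_ (fun t => ?_) t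
    · simp only [Fin.insertNth_apply_same, Pi.add_apply, add_mul, Finset.sum_add_distrib]
      ring
    · simp
  · intro r u
    ext t : 1
    refine Fin.succAboveCases s ?_ (fun t => ?_) t
    · simp only [Fin.insertNth_apply_same, Pi.smul_apply, smul_eq_mul, RingHom.id_apply, mul_assoc,
        ← Finset.mul_sum]
      ring
    · simp
  · intro u
    rw [hmem]
    simp only [LinearMap.coe_mk, AddHom.coe_mk, Fin.insertNth_apply_same, Fin.insertNth_apply_succAbove]
    linear_combination (-(∑ t, u t * l (s.succAbove t))) * hc
  · intro u u' h
    have h := congrArg Subtype.val h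
    simp only [LinearMap.codRestrict_apply, LinearMap.coe_mk, AddHom.coe_mk] at h
    ext t : 1
    have := congrFun h (s.succAbove t)
    simpa using this
  · rintro ⟨x, hx⟩
    refine ⟨fun t => x (s.succAbove t), Subtype.ext ?_⟩
    rw [hmem] at hx
    simp only [LinearMap.codRestrict_apply, LinearMap.coe_mk, AddHom.coe_mk]
    ext t : 1
    refine Fin.succAboveCases s ?_ (fun t => ?_) t
    · simp only [Fin.insertNth_apply_same]
      linear_combination (- c) * hx + x s * hc
    · simp

theorem det_eq_zero_of_line (L : Submodule S4 (Fin 3 → S4)) (hL : IsLine L) (x y z : Fin 3 → S4)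
    (hx : x ∈ L) (hy : y ∈ L) (hz : z ∈ L) : Matrix.det !![x 0, x 1, x 2; y 0, y 1, y 2; z 0, z 1, z 2] = 0 := by
  obtain ⟨e⟩ := hL
  have key : ∀ u (hu : u ∈ L), ∃ r s : S4, ∀ t, u t = r * (e (Pi.single 0 1)).1 t + s * (e (Pi.single 1 1)).1 t := by
    intro u hu
    refine ⟨e.symm ⟨u, hu⟩ 0, e.symm ⟨u, hu⟩ 1, fun t => ?_⟩
    have h1 : e.symm ⟨u, hu⟩ = e.symm ⟨u, hu⟩ 0 • Pi.single 0 1 + e.symm ⟨u, hu⟩ 1 • Pi.single 1 1 := by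
      ext t : 1
      fin_cases t <;> simp
    have h2 := congrArg e h1
    rw [LinearEquiv.apply_symm_apply, map_add, map_smul, map_smul] at h2
    have h3 := congrFun (congrArg Subtype.val h2) t
    simpa using h3
  obtain ⟨a, b, hx⟩ := key x hx
  obtain ⟨c, d, hy⟩ := key y hy
  obtain ⟨f, g, hz⟩ := key z hz
  rw [Matrix.det_fin_three]
  simp only [Matrix.of_apply, Matrix.cons_val, hx, hy, hz]
  ring

theorem upper (M : Multiset (Submodule S4 (Fin 3 → S4))) (hM : ∀ P ∈ M, IsPoint P) (hc : Multiset.card M = 19)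
    (hL : ∀ L : Submodule S4 (Fin 3 → S4), IsLine L → ∀ s t u, {s, t, u} ≤ M → ¬ (s ≤ L ∧ t ≤ L ∧ u ≤ L)) : False := by
  obtain ⟨σ⟩ := exists_iso
  obtain ⟨P, hP⟩ : ∃ P : Fin 19 → Submodule S4 (Fin 3 → S4), M = Multiset.map P Finset.univ.val := by
    have key : ∀ n, Multiset.card M = n → ∃ P : Fin n → Submodule S4 (Fin 3 → S4),
        M = Multiset.map P Finset.univ.val := by
      clear hL hM hc
      rintro n rfl
      obtain ⟨l, rfl⟩ := Quotient.exists_rep M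
      refine ⟨l.get, ?_⟩
      refine Eq.trans ?_ (Fin.univ_val_map l.get).symm
      rw [List.ofFn_get]
      rfl
    exact key 19 hc
  have hPt : ∀ s, IsPoint (P s) := fun s => hM _ (by rw [hP]; exact Multiset.mem_map_of_mem _ (Finset.mem_univ_val s))
  choose v hv hPv using hPt
  refine K4.no19 (fun s t => σ.symm (v s t).fst) (fun s t => σ.symm (v s t).snd) ?_ ?_
  · intro s h0
    obtain ⟨t, ht⟩ := hv s
    have := congrFun h0 t
    rw [TrivSqZeroExt.isUnit_iff_isUnit_fst] at ht
    simp at this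
    exact ht.ne_zero this
  · intro s t u hst hsu htu m n hm ⟨a1, a2, a3⟩
    let l : Fin 3 → S4 := fun t => TrivSqZeroExt.inl (σ (m t)) + TrivSqZeroExt.inr (σ (n t))
    obtain ⟨j, hj⟩ := Function.ne_iff.mp hm
    have hl : IsUnit (l j) := by
      rw [TrivSqZeroExt.isUnit_iff_isUnit_fst]
      simpa [l] using hj
    have hon : ∀ s, K4.On m n (fun t => σ.symm (v s t).fst) (fun t => σ.symm (v s t).snd) →
        P s ≤ LinearMap.ker (Fintype.linearCombination S4 l) := by
      intro s ⟨h1, h2⟩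
      rw [hPv, Submodule.span_singleton_le_iff_mem, LinearMap.mem_ker, Fintype.linearCombination_apply]
      have h1 := congrArg σ h1
      have h2 := congrArg σ h2
      simp only [dotProduct, Fin.sum_univ_three, map_add, map_mul, map_zero, RingEquiv.apply_symm_apply] at h1 h2
      simp only [Fin.sum_univ_three, smul_eq_mul, l]
      ext
      · simp only [TrivSqZeroExt.fst_add, TrivSqZeroExt.fst_mul, TrivSqZeroExt.fst_inl, TrivSqZeroExt.fst_inr,
          TrivSqZeroExt.fst_zero]
        linear_combination h1
      · simp only [TrivSqZeroExt.snd_add, DualNumber.snd_mul, TrivSqZeroExt.fst_add, TrivSqZeroExt.snd_inl,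
          TrivSqZeroExt.snd_inr, TrivSqZeroExt.fst_inl, TrivSqZeroExt.fst_inr, TrivSqZeroExt.snd_zero]
        linear_combination h2
    refine hL _ (isLine_ker l j hl) (P s) (P t) (P u) ?_ ⟨hon s a1, hon t a2, hon u a3⟩
    have hle : ({s, t, u} : Finset (Fin 19)).val ≤ Finset.univ.val := Finset.val_le_iff.mpr (Finset.subset_univ _)
    have := Multiset.map_le_map (f := P) hle
    rw [hP]
    have e : ({s, t, u} : Finset (Fin 19)).val = {s, t, u} := by
      rw [Finset.insert_val_of_notMem (by simp [hst, hsu]), Finset.insert_val_of_notMem (by simp [htu])]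
      rfl
    rw [e] at this
    exact this

namespace K4

/-- The affine parts of the 18 points `(x, y, 1) + ε (y², w² x², 0)` and `(1, w², 0)`, `(0, 1, 0)`. -/
def arc : Fin 18 → (Fin 3 → K4) × (Fin 3 → K4) := fun s =>
  match s.val with
  | 16 => (![1, v, 0], 0)
  | 17 => (![0, 1, 0], 0)
  | t =>
    let f : ℕ → K4 := fun j => if j = 0 then o else if j = 1 then i else if j = 2 then w else v
    let x := f (t / 4)
    let y := f (t % 4)
    (![x, y, 1], ![mul y y, mul v (mul x x), 0])

/-- The determinant in characteristic two. -/
def d3 (a b c : Fin 3 → K4) : K4 :=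
  a 0 * (b 1 * c 2 + b 2 * c 1) + (a 1 * (b 0 * c 2 + b 2 * c 0) + a 2 * (b 0 * c 1 + b 1 * c 0))

theorem arc_det : ∀ s t u : Fin 18, s ≠ t → s ≠ u → t ≠ u →
    ¬ (d3 (arc s).1 (arc t).1 (arc u).1 = 0 ∧
      d3 (arc s).2 (arc t).1 (arc u).1 + d3 (arc s).1 (arc t).2 (arc u).1 +
        d3 (arc s).1 (arc t).1 (arc u).2 = 0) := by
  decide +kernel

theorem arc_ne : ∀ s : Fin 18, ∃ t, (arc s).1 t ≠ 0 := by decide +kernel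

end K4

theorem lower : ∃ v : Fin 18 → Fin 3 → S4, (∀ s, ∃ t, IsUnit (v s t)) ∧ ∀ s t u, s ≠ t → s ≠ u → t ≠ u →
    Matrix.det !![v s 0, v s 1, v s 2; v t 0, v t 1, v t 2; v u 0, v u 1, v u 2] ≠ 0 := by
  obtain ⟨σ⟩ := exists_iso
  refine ⟨fun s t => TrivSqZeroExt.inl (σ ((K4.arc s).1 t)) + TrivSqZeroExt.inr (σ ((K4.arc s).2 t)), ?_, ?_⟩
  · intro s
    obtain ⟨t, ht⟩ := K4.arc_ne s
    refine ⟨t, ?_⟩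
    rw [TrivSqZeroExt.isUnit_iff_isUnit_fst]
    simpa using ht
  · intro s t u h1 h2 h3 hd
    apply K4.arc_det s t u h1 h2 h3
    rw [Matrix.det_fin_three] at hd
    simp only [Matrix.of_apply, Matrix.cons_val] at hd
    generalize K4.arc s = x at *
    generalize K4.arc t = y at *
    generalize K4.arc u = z at *
    have t2 : (2 : GaloisField 2 2) = 0 := by
      rw [← map_ofNat σ 2, K4.two_eq, map_zero]
    constructor
    · apply σ.injective
      have := congrArg TrivSqZeroExt.fst hd
      simp only [TrivSqZeroExt.fst_add, TrivSqZeroExt.fst_sub, TrivSqZeroExt.fst_mul, TrivSqZeroExt.fst_inl,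
        TrivSqZeroExt.fst_inr, TrivSqZeroExt.fst_zero, add_zero, CharTwo.sub_eq_add] at this
      simp only [K4.d3, map_add, map_mul, map_zero]
      linear_combination this
    · apply σ.injective
      have := congrArg TrivSqZeroExt.snd hd
      simp only [TrivSqZeroExt.fst_add, TrivSqZeroExt.fst_sub, TrivSqZeroExt.fst_mul, TrivSqZeroExt.fst_inl,
        TrivSqZeroExt.fst_inr, TrivSqZeroExt.snd_add, TrivSqZeroExt.snd_sub, DualNumber.snd_mul,
        TrivSqZeroExt.snd_inl, TrivSqZeroExt.snd_inr, TrivSqZeroExt.snd_zero, add_zero, zero_add,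
        CharTwo.sub_eq_add] at this
      simp only [K4.d3, map_add, map_mul, map_zero]
      linear_combination this

attribute [local instance] Classical.propDecidable

/-- The maximum size of a 2-arc in PHG(2, 𝔽₄[X]/(X²)) is 18: there is a set of 18
points with at most 2 on each line, but every multiset of 19 points has a line
containing at least 3 of its points counted with multiplicity. -/
theorem max_two_arc_S4 :
    (∃ A : Set (Submodule S4 (Fin 3 → S4)), (∀ P ∈ A, IsPoint P) ∧ A.ncard = 18 ∧
      ∀ L : Submodule S4 (Fin 3 → S4), IsLine L → {P ∈ A | P ≤ L}.ncard ≤ 2) ∧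
    (∀ M : Multiset (Submodule S4 (Fin 3 → S4)), (∀ P ∈ M, IsPoint P) →
      Multiset.card M = 19 →
      ∃ L : Submodule S4 (Fin 3 → S4), IsLine L ∧
        3 ≤ Multiset.card (M.filter fun P => P ≤ L)) := by
  constructor
  · obtain ⟨v, hv, hd⟩ := lower
    have hinj : Function.Injective fun s => Submodule.span S4 {v s} := by
      intro s t hst
      by_contra hne
      obtain ⟨u, hu⟩ : ∃ u : Fin 18, u ∉ ({s, t} : Finset (Fin 18)) := by
        by_contra hcon
        push Not at hcon
        have h1 := Finset.card_le_card (fun x _ => hcon x : (Finset.univ : Finset (Fin 18)) ⊆ {s, t})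
        have h2 := Finset.card_le_two (a := s) (b := t)
        simp only [Finset.card_univ, Fintype.card_fin] at h1
        omega
      simp only [Finset.mem_insert, Finset.mem_singleton, not_or] at hu
      apply hd s t u hne (Ne.symm hu.1) (Ne.symm hu.2)
      have h1 : v s ∈ Submodule.span S4 {v t} := by
        rw [← show Submodule.span S4 {v s} = Submodule.span S4 {v t} from hst]
        exact Submodule.mem_span_singleton_self _
      obtain ⟨r, hr⟩ := Submodule.mem_span_singleton.mp h1
      rw [Matrix.det_fin_three, ← hr]
      simp only [Matrix.of_apply, Matrix.cons_val, Pi.smul_apply, smul_eq_mul]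
      ring
    refine ⟨Set.range fun s => Submodule.span S4 {v s}, ?_, ?_, ?_⟩
    · rintro _ ⟨s, rfl⟩
      exact ⟨v s, hv s, rfl⟩
    · rw [← Set.image_univ, Set.ncard_image_of_injective _ hinj, Set.ncard_univ]
      simp
    · intro L hL
      by_contra hcon
      rw [not_le, Set.two_lt_ncard (Set.Finite.subset (Set.finite_range _) (Set.sep_subset _ _))] at hcon
      obtain ⟨a, ⟨⟨s, rfl⟩, ha⟩, b, ⟨⟨t, rfl⟩, hb⟩, c, ⟨⟨u, rfl⟩, hc⟩, hab, hac, hbc⟩ := hcon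
      rw [Submodule.span_singleton_le_iff_mem] at ha hb hc
      exact hd s t u (fun h => hab (by rw [h])) (fun h => hac (by rw [h])) (fun h => hbc (by rw [h]))
        (det_eq_zero_of_line L hL _ _ _ ha hb hc)
  · intro M hM hc
    by_contra hcon
    push Not at hcon
    refine upper M hM hc ?_
    intro L hL s t u hle ⟨h1, h2, h3⟩
    have := Multiset.card_le_card (Multiset.filter_le_filter (fun P => P ≤ L) hle)
    have h := hcon L hL
    rw [Multiset.filter_eq_self.mpr] at this
    · simp at this
      omega
    · intro P hP
      simp only [Multiset.insert_eq_cons, Multiset.mem_cons, Multiset.mem_singleton] at hP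
      rcases hP with rfl | rfl | rfl <;> assumption
end

section
/- Every multiset of 11 points in the projective Hjelmslev 3-space PHG(3, ℤ/4ℤ) has a hyperplane containing at least 5 of its points counted with multiplicity (so the maximum size of a 4-arc in PHG(3, ℤ/4ℤ) is 10, which is strictly smaller than the value 11 attained over 𝔽₂[X]/(X²)). -/
/-- A hyperplane of PHG(3, R): a free rank-3 submodule of R⁴. -/
abbrev IsHyperplane {R : Type} [CommRing R] (H : Submodule R (Fin 4 → R)) : Prop := IsFreeRank 3 H

abbrev R4 := ZMod 4

section Helpers


/-! ### Kernel-friendly search -/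

/-- The bit mask of the `j < n` with `f j`. -/
noncomputable def bitsOf (f : ℕ → Bool) (n : ℕ) : ℕ :=
  Nat.rec 0 (fun j r => Nat.lor r (Bool.rec 0 (Nat.pow 2 j) (f j))) n

/-- The code `j` is the vector of the four base-four digits of `j`; `dotB` tests whether this
vector has a unit coordinate and is orthogonal to `(a,b,c,d)`. -/
def dotB (a b c d j : ℕ) : Bool :=
  and (Nat.beq (Nat.mod (Nat.add (Nat.add (Nat.mul a (Nat.div j 64))
        (Nat.mul b (Nat.mod (Nat.div j 16) 4)))
      (Nat.add (Nat.mul c (Nat.mod (Nat.div j 4) 4)) (Nat.mul d (Nat.mod j 4)))) 4) 0)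
    (not (Nat.beq (Nat.land j 85) 0))

/-- The hyperplane codes are scrambled, so that the low bits of a mask are typical. -/
def scr (j : ℕ) : ℕ := Nat.mod (Nat.mul j 77) 256

/-- Mask of all the hyperplanes through `(a,b,c,d)`. -/
noncomputable def maskN (a b c d : ℕ) : ℕ := bitsOf (fun j => dotB a b c d (scr j)) 256

/-- Evaluate a number before passing it on. -/
noncomputable def force {α : Type} (n : ℕ) (k : ℕ → α) : α :=
  Nat.rec (k 0) (fun m _ => k (Nat.succ m)) n

/-- Keep the elements disjoint from `c`, prepend them to `acc`, pass the result on. -/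
noncomputable def filt (c : ℕ) (k : List ℕ → Bool) (C : List ℕ) : List ℕ → Bool :=
  List.rec (fun acc => k acc)
    (fun h _ ih acc => Bool.rec (ih acc) (ih (h :: acc)) (Nat.beq (Nat.land h c) 0)) C

/-- Add the point `h` to the counters and go on. -/
noncomputable def addPt (h c1 c2 c3 c4 : ℕ) (k : ℕ → ℕ → ℕ → ℕ → Bool) : Bool :=
  force (Nat.lor c1 h) fun d1 => force (Nat.lor c2 (Nat.land c1 h)) fun d2 =>
    force (Nat.lor c3 (Nat.land c2 h)) fun d3 => force (Nat.lor c4 (Nat.land c3 h)) fun d4 =>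
      k d1 d2 d3 d4

/-- Try all elements of the list as the next point. -/
noncomputable def loop (rc : ℕ → ℕ → ℕ → ℕ → List ℕ → Bool) (c1 c2 c3 c4 : ℕ)
    (D : List ℕ) : Bool :=
  List.rec true (fun h t ih => Bool.rec false ih
    (addPt h c1 c2 c3 c4 fun d1 d2 d3 d4 => rc d1 d2 d3 d4 (h :: t))) D

/-- `true` if no choice of `r` further points of `C` keeps all the hyperplanes at four points. -/
noncomputable def srch (r : ℕ) : ℕ → ℕ → ℕ → ℕ → List ℕ → Bool :=
  Nat.rec (fun _ _ _ _ _ => false)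
    (fun _ rc c1 c2 c3 c4 C => filt c4 (fun D => loop rc c1 c2 c3 c4 D) C []) r

/-- Add the points of a list, then go on. -/
noncomputable def start (k : ℕ → ℕ → ℕ → ℕ → Bool) (L : List ℕ) : ℕ → ℕ → ℕ → ℕ → Bool :=
  List.rec k (fun h _ ih c1 c2 c3 c4 => force h fun h => addPt h c1 c2 c3 c4 ih) L

/-- From a list of pairs (index, mask) keep the masks of index at least `i`. -/
noncomputable def filtI (i : ℕ) (k : List ℕ → Bool) (C : List (ℕ × ℕ)) : List ℕ → Bool :=
  List.rec (fun acc => k acc)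
    (fun e _ ih acc => Prod.rec (fun a m => Bool.rec (ih acc) (ih (m :: acc)) (Nat.ble i a)) e) C

abbrev Vec := Fin 4 → ZMod 4

/-- The vector of the base-four digits. -/
def vecOf (j : ℕ) : Vec :=
  ![((j / 64 : ℕ) : ZMod 4), ((j / 16 % 4 : ℕ) : ZMod 4), ((j / 4 % 4 : ℕ) : ZMod 4),
    ((j % 4 : ℕ) : ZMod 4)]

noncomputable def mask (v : Vec) : ℕ := maskN (v 0).val (v 1).val (v 2).val (v 3).val

/-- Evaluated list of pairs (index, mask) for the vectors with `p`. -/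
noncomputable def buildC (p : Vec → Bool) (ix : Vec → ℕ) (k : List (ℕ × ℕ) → Bool) (n : ℕ) :
    List (ℕ × ℕ) → Bool :=
  Nat.rec (fun acc => k acc) (fun j ih acc => Bool.rec (ih acc)
    (force (ix (vecOf j)) fun i => force (mask (vecOf j)) fun m => ih ((i, m) :: acc))
    (p (vecOf j))) n

/-- Search over a list of representatives of the next point. -/
noncomputable def loopR (r c1 c2 c3 c4 : ℕ) (C : List (ℕ × ℕ)) (reps : List (ℕ × Vec)) : Bool :=
  List.rec true (fun e _ ih => Prod.rec (fun i v => Bool.rec false ih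
    (Bool.rec true
      (start (fun d1 d2 d3 d4 => filtI i (fun D => srch r d1 d2 d3 d4 D) C []) [mask v]
      c1 c2 c3 c4) (Nat.beq (Nat.land (mask v) c4) 0))) e) reps

noncomputable def run (S : List Vec) (p : Vec → Bool) (ix : Vec → ℕ) (reps : List (ℕ × Vec))
    (r : ℕ) : Bool :=
  buildC p ix (fun C => start (fun c1 c2 c3 c4 => loopR r c1 c2 c3 c4 C reps) (S.map mask)
    0 0 0 0) 256 []

/-! ### Soundness of the search -/

theorem force_eq {α : Type} (n : ℕ) (k : ℕ → α) : force n k = k n := by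
  cases n <;> rfl

theorem addPt_eq (h c1 c2 c3 c4 : ℕ) (k : ℕ → ℕ → ℕ → ℕ → Bool) :
    addPt h c1 c2 c3 c4 k
      = k (c1 ||| h) (c2 ||| (c1 &&& h)) (c3 ||| (c2 &&& h)) (c4 ||| (c3 &&& h)) := by
  simp only [addPt, force_eq]; rfl

/-- The counters are below the true counts. -/
def CInv (c1 c2 c3 c4 : ℕ) (cnt : ℕ → ℕ) : Prop :=
  ∀ j, (c1.testBit j = true → 1 ≤ cnt j) ∧ (c2.testBit j = true → 2 ≤ cnt j) ∧
    (c3.testBit j = true → 3 ≤ cnt j) ∧ (c4.testBit j = true → 4 ≤ cnt j)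

theorem CInv.add {c1 c2 c3 c4 : ℕ} {cnt : ℕ → ℕ} (H : CInv c1 c2 c3 c4 cnt) (h : ℕ) :
    CInv (c1 ||| h) (c2 ||| (c1 &&& h)) (c3 ||| (c2 &&& h)) (c4 ||| (c3 &&& h))
      (fun j => cnt j + if h.testBit j = true then 1 else 0) := by
  intro j
  obtain ⟨h1, h2, h3, h4⟩ := H j
  simp only [Nat.testBit_or, Nat.testBit_and]
  cases hb : h.testBit j <;> simp_all <;> refine ⟨?_, ?_, ?_⟩ <;> rintro (h | h) <;> grind

theorem filt_spec (c : ℕ) (k : List ℕ → Bool) (C acc : List ℕ) :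
    ∃ D, filt c k C acc = k D ∧ ∀ x, x ∈ D ↔ x ∈ acc ∨ (x ∈ C ∧ x &&& c = 0) := by
  induction C generalizing acc with
  | nil => exact ⟨acc, rfl, by simp⟩
  | cons h t ih =>
    by_cases hh : h &&& c = 0
    · obtain ⟨D, h1, h2⟩ := ih (h :: acc)
      refine ⟨D, ?_, ?_⟩
      · rw [← h1]
        have : Nat.beq (Nat.land h c) 0 = true := by rw [Nat.beq_eq]; exact hh
        show (Bool.rec (filt c k t acc) (filt c k t (h :: acc)) (Nat.beq (Nat.land h c) 0) : Bool) = _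
        rw [this]
      · intro x; rw [h2]; simp only [List.mem_cons]
        constructor
        · rintro ((rfl | h) | h) <;> tauto
        · rintro (h | ⟨rfl | h, h'⟩) <;> tauto
    · obtain ⟨D, h1, h2⟩ := ih acc
      refine ⟨D, ?_, ?_⟩
      · rw [← h1]
        have : Nat.beq (Nat.land h c) 0 = false := by
          rw [← Bool.not_eq_true, Nat.beq_eq]; exact hh
        show (Bool.rec (filt c k t acc) (filt c k t (h :: acc)) (Nat.beq (Nat.land h c) 0) : Bool) = _
        rw [this]
      · intro x; rw [h2]; simp only [List.mem_cons]
        constructor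
        · rintro (h | h) <;> tauto
        · rintro (h | ⟨rfl | h, h'⟩) <;> tauto

theorem loop_spec (rc : ℕ → ℕ → ℕ → ℕ → List ℕ → Bool) (c1 c2 c3 c4 : ℕ) (D : List ℕ)
    (hl : loop rc c1 c2 c3 c4 D = true) (T : Multiset ℕ) (hT : T ≠ 0) (hD : ∀ x ∈ T, x ∈ D) :
    ∃ h ∈ T, ∃ E, (∀ x ∈ T, x ∈ E) ∧
      rc (c1 ||| h) (c2 ||| (c1 &&& h)) (c3 ||| (c2 &&& h)) (c4 ||| (c3 &&& h)) E = true := by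
  induction D with
  | nil =>
    obtain ⟨x, hx⟩ := Multiset.exists_mem_of_ne_zero hT
    exact absurd (hD x hx) (by simp)
  | cons h t ih =>
    have hl' : Bool.rec false (loop rc c1 c2 c3 c4 t)
      (addPt h c1 c2 c3 c4 fun d1 d2 d3 d4 => rc d1 d2 d3 d4 (h :: t)) = true := hl
    rw [addPt_eq] at hl'
    by_cases hh : h ∈ T
    · refine ⟨h, hh, h :: t, hD, ?_⟩
      revert hl'
      cases rc (c1 ||| h) (c2 ||| (c1 &&& h)) (c3 ||| (c2 &&& h)) (c4 ||| (c3 &&& h)) (h :: t)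
      · intro h; exact h
      · intro _; rfl
    · apply ih
      · revert hl'
        cases rc (c1 ||| h) (c2 ||| (c1 &&& h)) (c3 ||| (c2 &&& h)) (c4 ||| (c3 &&& h)) (h :: t)
        · intro h; exact absurd h (by simp)
        · intro h; exact h
      · intro x hx
        rcases List.mem_cons.1 (hD x hx) with rfl | h'
        · exact absurd hx hh
        · exact h'

theorem srch_sound (r : ℕ) : ∀ (c1 c2 c3 c4 : ℕ) (C : List ℕ), srch r c1 c2 c3 c4 C = true →
    ∀ T : Multiset ℕ, T.card = r → (∀ x ∈ T, x ∈ C) → ∀ cnt, CInv c1 c2 c3 c4 cnt →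
      ∃ j, 5 ≤ cnt j + T.countP (fun x => x.testBit j = true) := by
  induction r with
  | zero => intro c1 c2 c3 c4 C h; exact absurd h (by simp [srch])
  | succ r ih =>
    intro c1 c2 c3 c4 C h T hT hC cnt hI
    by_contra hcon
    push Not at hcon
    obtain ⟨D, h1, h2⟩ := filt_spec c4 (fun D => loop (srch r) c1 c2 c3 c4 D) C []
    have h' : filt c4 (fun D => loop (srch r) c1 c2 c3 c4 D) C [] = true := h
    rw [h1] at h'
    have hD : ∀ x ∈ T, x ∈ D := by
      intro x hx
      rw [h2]
      refine Or.inr ⟨hC x hx, ?_⟩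
      apply Nat.eq_of_testBit_eq
      intro j
      rw [Nat.testBit_and, Nat.zero_testBit]
      by_contra hb
      simp only [Bool.not_eq_false, Bool.and_eq_true] at hb
      have := (hI j).2.2.2 hb.2
      have h3 : 0 < T.countP (fun x => x.testBit j = true) := Multiset.countP_pos.2 ⟨x, hx, hb.1⟩
      have := hcon j
      omega
    obtain ⟨x, hx, E, hE, hr⟩ := loop_spec _ _ _ _ _ _ h' T (by rintro rfl; simp at hT) hD
    obtain ⟨T', rfl⟩ := Multiset.exists_cons_of_mem hx
    obtain ⟨j, hj⟩ := ih _ _ _ _ _ hr T' (by simpa using hT)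
      (fun y hy => hE y (Multiset.mem_cons_of_mem hy)) _ (hI.add x)
    have := hcon j
    rw [Multiset.countP_cons] at this
    omega

theorem start_spec (k : ℕ → ℕ → ℕ → ℕ → Bool) (L : List ℕ) (c1 c2 c3 c4 : ℕ) (cnt : ℕ → ℕ)
    (hI : CInv c1 c2 c3 c4 cnt) (h : start k L c1 c2 c3 c4 = true) :
    ∃ d1 d2 d3 d4, k d1 d2 d3 d4 = true ∧
      CInv d1 d2 d3 d4 (fun j => cnt j + L.countP (fun x => x.testBit j)) := by
  induction L generalizing c1 c2 c3 c4 cnt with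
  | nil => exact ⟨c1, c2, c3, c4, h, by simpa using hI⟩
  | cons x t ih =>
    have h' : (force x fun x => addPt x c1 c2 c3 c4 (start k t)) = true := h
    rw [force_eq, addPt_eq] at h'
    obtain ⟨d1, d2, d3, d4, hk, hJ⟩ := ih _ _ _ _ _ (hI.add x) h'
    refine ⟨d1, d2, d3, d4, hk, ?_⟩
    convert hJ using 2 with j
    rw [List.countP_cons]
    omega

theorem filtI_spec (i : ℕ) (k : List ℕ → Bool) (C : List (ℕ × ℕ)) (acc : List ℕ) :
    ∃ D, filtI i k C acc = k D ∧ (∀ x ∈ acc, x ∈ D) ∧ ∀ e ∈ C, i ≤ e.1 → e.2 ∈ D := by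
  induction C generalizing acc with
  | nil => exact ⟨acc, rfl, by simp, by simp⟩
  | cons e t ih =>
    obtain ⟨a, m⟩ := e
    have e1 : filtI i k ((a, m) :: t) acc
      = Bool.rec (filtI i k t acc) (filtI i k t (m :: acc)) (Nat.ble i a) := rfl
    cases hb : Nat.ble i a
    · obtain ⟨D, h1, h2, h3⟩ := ih acc
      refine ⟨D, by rw [e1, hb]; exact h1, h2, ?_⟩
      intro e he hi
      rcases List.mem_cons.1 he with rfl | he
      · rw [Nat.ble_eq_true_of_le hi] at hb; exact absurd hb (by simp)
      · exact h3 e he hi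
    · obtain ⟨D, h1, h2, h3⟩ := ih (m :: acc)
      refine ⟨D, by rw [e1, hb]; exact h1, fun x hx => h2 x (List.mem_cons_of_mem _ hx), ?_⟩
      intro e he hi
      rcases List.mem_cons.1 he with rfl | he
      · exact h2 _ (List.mem_cons_self ..)
      · exact h3 e he hi

theorem buildC_spec (p : Vec → Bool) (ix : Vec → ℕ) (k : List (ℕ × ℕ) → Bool) (n : ℕ)
    (acc : List (ℕ × ℕ)) :
    ∃ C, buildC p ix k n acc = k C ∧ (∀ x ∈ acc, x ∈ C) ∧
      ∀ j < n, p (vecOf j) = true → (ix (vecOf j), mask (vecOf j)) ∈ C := by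
  induction n generalizing acc with
  | zero => exact ⟨acc, rfl, by simp, by simp⟩
  | succ n ih =>
    have e1 : buildC p ix k (n + 1) acc = Bool.rec (buildC p ix k n acc)
      (force (ix (vecOf n)) fun i => force (mask (vecOf n)) fun m => buildC p ix k n ((i, m) :: acc))
      (p (vecOf n)) := rfl
    rw [force_eq, force_eq] at e1
    cases hb : p (vecOf n)
    · obtain ⟨D, h1, h2, h3⟩ := ih acc
      refine ⟨D, by rw [e1, hb]; exact h1, h2, ?_⟩
      intro j hj hp
      rcases Nat.lt_succ_iff_lt_or_eq.1 hj with h | rfl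
      · exact h3 j h hp
      · rw [hp] at hb; exact absurd hb (by simp)
    · obtain ⟨D, h1, h2, h3⟩ := ih ((ix (vecOf n), mask (vecOf n)) :: acc)
      refine ⟨D, by rw [e1, hb]; exact h1, fun x hx => h2 x (List.mem_cons_of_mem _ hx), ?_⟩
      intro j hj hp
      rcases Nat.lt_succ_iff_lt_or_eq.1 hj with h | rfl
      · exact h3 j h hp
      · exact h2 _ (List.mem_cons_self ..)

theorem loopR_spec (r c1 c2 c3 c4 : ℕ) (C : List (ℕ × ℕ)) (reps : List (ℕ × Vec))
    (h : loopR r c1 c2 c3 c4 C reps = true) (e : ℕ × Vec) (he : e ∈ reps) :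
    mask e.2 &&& c4 ≠ 0 ∨
    start (fun d1 d2 d3 d4 => filtI e.1 (fun D => srch r d1 d2 d3 d4 D) C []) [mask e.2]
      c1 c2 c3 c4 = true := by
  induction reps with
  | nil => simp at he
  | cons f t ih =>
    obtain ⟨i, v⟩ := f
    have h' : Bool.rec false (loopR r c1 c2 c3 c4 C t)
      (Bool.rec true
      (start (fun d1 d2 d3 d4 => filtI i (fun D => srch r d1 d2 d3 d4 D) C []) [mask v]
      c1 c2 c3 c4) (Nat.beq (Nat.land (mask v) c4) 0) : Bool) = true := h
    cases hb : (Bool.rec true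
      (start (fun d1 d2 d3 d4 => filtI i (fun D => srch r d1 d2 d3 d4 D) C []) [mask v]
      c1 c2 c3 c4) (Nat.beq (Nat.land (mask v) c4) 0) : Bool)
    · rw [hb] at h'; exact absurd h' (by simp)
    · rw [hb] at h'
      rcases List.mem_cons.1 he with rfl | he
      · by_cases hz : mask v &&& c4 = 0
        · right
          have : Nat.beq (Nat.land (mask v) c4) 0 = true := by rw [Nat.beq_eq]; exact hz
          rw [this] at hb
          exact hb
        · exact Or.inl hz
      · exact ih h' he

theorem run_sound (S : List Vec) (p : Vec → Bool) (ix : Vec → ℕ) (reps : List (ℕ × Vec))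
    (r : ℕ) (h : run S p ix reps r = true) (e : ℕ × Vec) (he : e ∈ reps) (T : Multiset ℕ)
    (hT : T.card = r)
    (hm : ∀ x ∈ T, ∃ j < 256, p (vecOf j) = true ∧ e.1 ≤ ix (vecOf j) ∧ x = mask (vecOf j)) :
    ∃ j, 5 ≤ S.countP (fun v => (mask v).testBit j) + (if (mask e.2).testBit j = true then 1 else 0)
      + T.countP (fun x => x.testBit j = true) := by
  unfold run at h
  obtain ⟨C, h1, -, h3⟩ := buildC_spec p ix
    (fun C => start (fun c1 c2 c3 c4 => loopR r c1 c2 c3 c4 C reps) (S.map mask) 0 0 0 0) 256 []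
  rw [h1] at h
  obtain ⟨c1, c2, c3, c4, h, hI⟩ := start_spec _ _ 0 0 0 0 (fun _ => 0) (by intro j; simp) h
  rcases loopR_spec _ _ _ _ _ _ _ h e he with hz | h
  · obtain ⟨j, hj⟩ := Nat.exists_testBit_of_ne_zero hz
    rw [Nat.testBit_and, Bool.and_eq_true] at hj
    have := (hI j).2.2.2 hj.2
    simp only [List.countP_map, zero_add] at this
    refine ⟨j, ?_⟩
    rw [if_pos hj.1]
    have e1 : S.countP (fun v => (mask v).testBit j) ≥ 4 := this
    omega
  obtain ⟨d1, d2, d3, d4, h, hJ⟩ := start_spec _ _ _ _ _ _ _ hI h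
  obtain ⟨D, h4, -, h5⟩ := filtI_spec e.1 (fun D => srch r d1 d2 d3 d4 D) C []
  rw [h4] at h
  obtain ⟨j, hj⟩ := srch_sound _ _ _ _ _ _ h T hT (by
    intro x hx
    obtain ⟨j, hj, hp, hi, rfl⟩ := hm x hx
    exact h5 _ (h3 j hj hp) hi) _ hJ
  refine ⟨j, ?_⟩
  simp only [List.countP_map, List.countP_cons, List.countP_nil, zero_add] at hj
  exact hj

/-! ### Vectors, masks and arcs -/

def dotV (w v : Vec) : ZMod 4 := w 0 * v 0 + w 1 * v 1 + w 2 * v 2 + w 3 * v 3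

/-- Vectors with a unit coordinate. -/
def Un (v : Vec) : Prop := ∃ i, v i = 1 ∨ v i = 3

instance (v : Vec) : Decidable (Un v) := by unfold Un; infer_instance

theorem bitsOf_testBit (f : ℕ → Bool) (n j : ℕ) :
    (bitsOf f n).testBit j = (decide (j < n) && f j) := by
  induction n with
  | zero => simp [bitsOf]
  | succ n ih =>
    have : bitsOf f (n + 1) = bitsOf f n ||| (Bool.rec 0 (2 ^ n) (f n)) := rfl
    rw [this, Nat.testBit_or, ih]
    have h2 : (Bool.rec 0 (2 ^ n) (f n) : ℕ).testBit j = (decide (n = j) && f n) := by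
      cases f n
      · simp
      · simp [Nat.testBit_two_pow]
    rw [h2]
    by_cases hj : n = j
    · subst hj; simp
    · have : (j < n + 1) ↔ j < n := by omega
      simp [hj, this]

theorem un_vecOf : ∀ j < 256, Nat.land j 85 ≠ 0 ↔ Un (vecOf j) := by
  decide +kernel

theorem mask_testBit (v : Vec) (j : ℕ) : (mask v).testBit j = true ↔
    j < 256 ∧ Un (vecOf (scr j)) ∧ dotV (vecOf (scr j)) v = 0 := by
  have hs : scr j < 256 := Nat.mod_lt _ (by norm_num)
  rw [mask, maskN, bitsOf_testBit, Bool.and_eq_true, decide_eq_true_iff, ← un_vecOf _ hs]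
  generalize scr j = s at *
  apply and_congr_right
  intro _
  unfold dotB
  rw [Bool.and_eq_true, Nat.beq_eq, and_comm]
  apply and_congr
  · rw [Bool.not_eq_true', ← Bool.not_eq_true, Nat.beq_eq]
  · show ((v 0).val * (s / 64) + (v 1).val * (s / 16 % 4)
      + ((v 2).val * (s / 4 % 4) + (v 3).val * (s % 4))) % 4 = 0 ↔ _
    rw [← Nat.dvd_iff_mod_eq_zero, ← ZMod.natCast_eq_zero_iff]
    push_cast [ZMod.natCast_zmod_val]
    apply Eq.congr_left
    simp only [dotV, vecOf, Matrix.cons_val]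
    ring

theorem dotV_neg (w v : Vec) : dotV w (-v) = - dotV w v := by
  simp only [dotV, Pi.neg_apply]; ring

theorem mask_neg (v : Vec) : mask (-v) = mask v := by
  apply Nat.eq_of_testBit_eq
  intro j
  rw [Bool.eq_iff_iff, mask_testBit, mask_testBit, dotV_neg, neg_eq_zero]

/-- First unit coordinate is one. -/
def nrmB (v : Vec) : Bool :=
  v 0 = 1 || ((v 0 = 0 || v 0 = 2) && (v 1 = 1 || ((v 1 = 0 || v 1 = 2) &&
    (v 2 = 1 || ((v 2 = 0 || v 2 = 2) && v 3 = 1)))))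

def nrmV (v : Vec) : Vec := if nrmB v = true then v else -v

theorem forall_vec {P : Vec → Prop} (h : ∀ a b c d : ZMod 4, P ![a, b, c, d]) (v : Vec) : P v := by
  have := h (v 0) (v 1) (v 2) (v 3)
  convert this
  ext i; fin_cases i <;> rfl

theorem nrmB_or (v : Vec) : Un v → nrmB v = true ∨ nrmB (-v) = true :=
  forall_vec (P := fun v => Un v → nrmB v = true ∨ nrmB (-v) = true) (by decide +kernel) v

theorem exists_code (v : Vec) : ∃ j < 256, vecOf j = v :=
  forall_vec (P := fun v => ∃ j < 256, vecOf j = v) (by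
    intro a b c d
    refine ⟨a.val * 64 + b.val * 16 + c.val * 4 + d.val, ?_, ?_⟩
    · have := a.val_lt; have := b.val_lt; have := c.val_lt; have := d.val_lt
      omega
    · have := a.val_lt; have := b.val_lt; have := c.val_lt; have := d.val_lt
      have h1 : (a.val * 64 + b.val * 16 + c.val * 4 + d.val) / 64 = a.val := by omega
      have h2 : (a.val * 64 + b.val * 16 + c.val * 4 + d.val) / 16 % 4 = b.val := by omega
      have h3 : (a.val * 64 + b.val * 16 + c.val * 4 + d.val) / 4 % 4 = c.val := by omega
      have h4 : (a.val * 64 + b.val * 16 + c.val * 4 + d.val) % 4 = d.val := by omega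
      simp only [vecOf, h1, h2, h3, h4, ZMod.natCast_zmod_val]) v

/-- A 4-arc, by vectors. -/
def Arc (V : Multiset Vec) : Prop :=
  (∀ v ∈ V, Un v) ∧ ∀ w, Un w → V.countP (fun v => dotV w v = 0) ≤ 4

/-- The computation rules out the extensions of `S` by a representative. -/
theorem leaf (S : List Vec) (A : Vec → Bool) (ix : Vec → ℕ) (reps : List (ℕ × Vec)) (r : ℕ)
    (hA : ∀ v, A (-v) = A v) (hix : ∀ v, ix (-v) = ix v)
    (h : run S (fun v => nrmB v && A v) ix reps r = true) (i : ℕ) (ρ : Vec) (he : (i, ρ) ∈ reps)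
    (T : Multiset Vec) (hT : T.card = r) (hTA : ∀ v ∈ T, A v = true ∧ i ≤ ix v) :
    ¬ Arc ((S : Multiset Vec) + (ρ ::ₘ T)) := by
  rintro ⟨hU, harc⟩
  obtain ⟨j, hj⟩ := run_sound _ _ _ _ _ h _ he (T.map mask) (by simpa using hT) (by
    intro x hx
    obtain ⟨v, hv, rfl⟩ := Multiset.mem_map.1 hx
    have hun : Un v := hU v (by simp [hv])
    rcases nrmB_or v hun with hn | hn
    · obtain ⟨j, hj, e⟩ := exists_code v
      refine ⟨j, hj, ?_, ?_, by rw [e]⟩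
      · rw [e, hn, (hTA v hv).1]; rfl
      · rw [e]; exact (hTA v hv).2
    · obtain ⟨j, hj, e⟩ := exists_code (-v)
      refine ⟨j, hj, ?_, ?_, by rw [e, mask_neg]⟩
      · rw [e, hn, hA, (hTA v hv).1]; rfl
      · rw [e, hix]; exact (hTA v hv).2)
  have key : ∀ v, (mask v).testBit j = true → (j < 256 ∧ Un (vecOf (scr j))) ∧
      dotV (vecOf (scr j)) v = 0 := fun v hv => by
    have := (mask_testBit v j).1 hv; tauto
  by_cases hw : j < 256 ∧ Un (vecOf (scr j))
  · have h4 := harc _ hw.2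
    rw [Multiset.countP_add, Multiset.countP_cons, Multiset.coe_countP] at h4
    have e1 : S.countP (fun v => (mask v).testBit j)
        ≤ S.countP (fun v => decide (dotV (vecOf (scr j)) v = 0)) :=
      List.countP_mono_left (fun v _ hv => by simpa using (key v hv).2)
    have e2 : (if (mask ρ).testBit j = true then 1 else 0)
        ≤ if dotV (vecOf (scr j)) ρ = 0 then 1 else 0 := by
      split_ifs with h1 h2 <;> first | omega | exact absurd (key _ h1).2 h2
    have e3 : (T.map mask).countP (fun x => x.testBit j = true)
        ≤ T.countP (fun v => dotV (vecOf (scr j)) v = 0) := by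
      rw [Multiset.countP_map, ← Multiset.countP_eq_card_filter]
      refine Quotient.inductionOn T (fun l => ?_)
      simp only [Multiset.quot_mk_to_coe, Multiset.coe_countP]
      exact List.countP_mono_left (fun v _ hv => by simp at hv ⊢; exact (key v hv).2)
    simp only at hj
    omega
  · have hz : ∀ v, (mask v).testBit j = false := by
      intro v
      rw [← Bool.not_eq_true]
      exact fun hv => hw (key v hv).1
    simp [hz, Multiset.countP_map] at hj

/-! ### Monomial maps -/

/-- Permutation and signs. -/
abbrev Mon := (Fin 4 → Fin 4) × (Fin 4 → ZMod 4)

def ap (g : Mon) (v : Vec) : Vec := fun i => g.2 i * v (g.1 i)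

def OkMon (g : Mon) : Prop := (∀ k, ∃ i, g.1 i = k) ∧ ∀ i, g.2 i = 1 ∨ g.2 i = 3

instance (g : Mon) : Decidable (OkMon g) := by unfold OkMon; infer_instance

theorem dotV_sum (w v : Vec) : dotV w v = ∑ i, w i * v i := by
  rw [Fin.sum_univ_four]; rfl

theorem unit_mul : ∀ x y : ZMod 4, (x = 1 ∨ x = 3) → (y = 1 ∨ y = 3) →
    (x * y = 1 ∨ x * y = 3) := by decide

theorem un_ap (g : Mon) (hg : OkMon g) (v : Vec) (hv : Un v) : Un (ap g v) := by
  obtain ⟨k, hk⟩ := hv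
  obtain ⟨i, rfl⟩ := hg.1 k
  exact ⟨i, unit_mul _ _ (hg.2 i) hk⟩

theorem bij_of_ok (g : Mon) (hg : OkMon g) : Function.Bijective g.1 :=
  Finite.surjective_iff_bijective.1 hg.1

theorem dot_ap (g : Mon) (hg : OkMon g) (w : Vec) (hw : Un w) :
    ∃ w', Un w' ∧ ∀ v, dotV w (ap g v) = dotV w' v := by
  let σ : Fin 4 ≃ Fin 4 := Equiv.ofBijective g.1 (bij_of_ok g hg)
  refine ⟨fun k => w (σ.symm k) * g.2 (σ.symm k), ?_, ?_⟩
  · obtain ⟨i, hi⟩ := hw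
    refine ⟨σ i, ?_⟩
    simp only [Equiv.symm_apply_apply]
    exact unit_mul _ _ hi (hg.2 i)
  · intro v
    rw [dotV_sum, dotV_sum,
      ← Equiv.sum_comp σ (fun k => w (σ.symm k) * g.2 (σ.symm k) * v k)]
    apply Finset.sum_congr rfl
    intro i _
    simp only [Equiv.symm_apply_apply, ap]
    rw [mul_assoc]
    rfl

/-- Images of arcs are arcs. -/
theorem Arc.map {V : Multiset Vec} (h : Arc V) (f : Vec → Vec) (hu : ∀ v, Un v → Un (f v))
    (hf : ∀ w, Un w → ∃ w', Un w' ∧ ∀ v, dotV w (f v) = dotV w' v) : Arc (V.map f) := by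
  refine ⟨?_, ?_⟩
  · intro v hv
    obtain ⟨u, hu', rfl⟩ := Multiset.mem_map.1 hv
    exact hu _ (h.1 u hu')
  · intro w hw
    obtain ⟨w', hw', e⟩ := hf w hw
    rw [Multiset.countP_map, ← Multiset.countP_eq_card_filter]
    simp only [e]
    exact h.2 w' hw'

theorem nrmV_eq (v : Vec) : nrmV v = v ∨ nrmV v = -v := by
  unfold nrmV; split_ifs <;> simp

theorem dotV_nrmV (w v : Vec) : dotV w (nrmV v) = 0 ↔ dotV w v = 0 := by
  rcases nrmV_eq v with h | h <;> rw [h]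
  rw [dotV_neg, neg_eq_zero]

theorem neg_un (v : Vec) (h : Un v) : Un (-v) := by
  obtain ⟨i, hi⟩ := h
  refine ⟨i, ?_⟩
  simp only [Pi.neg_apply]
  rcases hi with h | h <;> rw [h] <;> decide

theorem un_neg_iff (v : Vec) : Un (-v) ↔ Un v :=
  ⟨fun h => by simpa using neg_un _ h, neg_un v⟩

/-- Arcs only depend on the points. -/
theorem Arc.congr {V W : Multiset Vec} (h : Arc V) (e : V.map nrmV = W.map nrmV) : Arc W := by
  have hun : ∀ v, Un (nrmV v) ↔ Un v := fun v => by
    rcases nrmV_eq v with h | h <;> rw [h]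
    exact un_neg_iff v
  have hc : ∀ (V : Multiset Vec) w, (V.map nrmV).countP (fun v => dotV w v = 0)
      = V.countP (fun v => dotV w v = 0) := by
    intro V w
    rw [Multiset.countP_map, ← Multiset.countP_eq_card_filter]
    simp only [dotV_nrmV]
  refine ⟨?_, ?_⟩
  · intro v hv
    have : nrmV v ∈ V.map nrmV := e ▸ Multiset.mem_map_of_mem _ hv
    obtain ⟨u, hu, e'⟩ := Multiset.mem_map.1 this
    rw [← hun, ← e', hun]
    exact h.1 u hu
  · intro w hw
    rw [← hc, ← e, hc]
    exact h.2 w hw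

/-- Choose the next point of minimal index and move it to its representative. -/
theorem branch (S : List Vec) (A : Vec → Bool) (ix : Vec → ℕ) (reps : List Vec) (Gs : List Mon)
    (r : ℕ) (hG : ∀ g ∈ Gs, OkMon g)
    (hS : ∀ g ∈ Gs, (S.map (fun v => nrmV (ap g v))).Perm (S.map nrmV))
    (hA : ∀ g ∈ Gs, ∀ v, A (ap g v) = A v) (hix : ∀ g ∈ Gs, ∀ v, ix (ap g v) = ix v)
    (hrep : ∀ v, Un v → A v = true → ∃ g ∈ Gs, ∃ ρ, reps[ix v]? = some ρ ∧
      nrmV (ap g v) = nrmV ρ)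
    (next : ∀ i ρ, reps[i]? = some ρ → ∀ T : Multiset Vec, T.card = r →
      (∀ v ∈ T, A v = true ∧ i ≤ ix v) → ¬ Arc ((S : Multiset Vec) + (ρ ::ₘ T)))
    (T : Multiset Vec) (hT : T.card = r + 1) (hTA : ∀ v ∈ T, A v = true) :
    ¬ Arc ((S : Multiset Vec) + T) := by
  intro harc
  obtain ⟨v, hv, hmin⟩ : ∃ v ∈ T, ∀ u ∈ T, ix v ≤ ix u := by
    have hne : (T.toFinset).Nonempty := by
      rw [Multiset.toFinset_nonempty]; rintro rfl; simp at hT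
    obtain ⟨v, hv, h⟩ := Finset.exists_min_image T.toFinset ix hne
    exact ⟨v, by simpa using hv, fun u hu => h u (by simpa using hu)⟩
  obtain ⟨T', rfl⟩ := Multiset.exists_cons_of_mem hv
  obtain ⟨g, hg, ρ, hρ, e⟩ := hrep v (harc.1 v (by simp)) (hTA v hv)
  have h2 := harc.map (ap g) (un_ap g (hG g hg)) (dot_ap g (hG g hg))
  refine next (ix v) ρ hρ (T'.map (ap g)) (by simpa using hT) ?_ (h2.congr ?_)
  · intro u hu
    obtain ⟨u, hu', rfl⟩ := Multiset.mem_map.1 hu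
    rw [hA g hg, hix g hg]
    exact ⟨hTA u (Multiset.mem_cons_of_mem hu'), hmin u (Multiset.mem_cons_of_mem hu')⟩
  · simp only [Multiset.map_add, Multiset.map_cons, e]
    congr 1
    simp only [Multiset.map_coe, List.map_map]
    exact Quotient.sound (hS g hg)

/-! ### Indices from sums over the coordinates -/

def sm (ψ : Fin 4 → ZMod 4 → ℕ) (v : Vec) : ℕ := ψ 0 (v 0) + ψ 1 (v 1) + ψ 2 (v 2) + ψ 3 (v 3)

def key (ψ : Fin 4 → ZMod 4 → ℕ) (v : Vec) : ℕ := min (sm ψ v) (sm ψ (-v))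

theorem key_neg (ψ : Fin 4 → ZMod 4 → ℕ) (v : Vec) : key ψ (-v) = key ψ v := by
  simp only [key, neg_neg, min_comm]

theorem sm_ap (ψ : Fin 4 → ZMod 4 → ℕ) (g : Mon) (hg : OkMon g)
    (h : ∀ i x, ψ i (g.2 i * x) = ψ (g.1 i) x) (v : Vec) : sm ψ (ap g v) = sm ψ v := by
  have e : ∀ v, sm ψ v = ∑ i, ψ i (v i) := fun v => by rw [Fin.sum_univ_four]; rfl
  rw [e, e, ← Equiv.sum_comp (Equiv.ofBijective g.1 (bij_of_ok g hg)) (fun i => ψ i (v i))]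
  exact Finset.sum_congr rfl (fun i _ => h i _)

theorem ap_neg (g : Mon) (v : Vec) : ap g (-v) = - ap g v := by
  ext i; simp [ap]

theorem key_ap (ψ : Fin 4 → ZMod 4 → ℕ) (g : Mon) (hg : OkMon g)
    (h : ∀ i x, ψ i (g.2 i * x) = ψ (g.1 i) x) (v : Vec) : key ψ (ap g v) = key ψ v := by
  rw [key, key, ← ap_neg, sm_ap ψ g hg h, sm_ap ψ g hg h]

/-- Position of the key of `v` among the keys of the representatives. -/
def idx (ψ : Fin 4 → ZMod 4 → ℕ) (keys : List ℕ) (v : Vec) : ℕ := keys.idxOf (key ψ v)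

/-! ### The data of the search -/

def perms4 : List (Fin 4 → Fin 4) :=
  [![0, 1, 2, 3], ![0, 1, 3, 2], ![0, 2, 1, 3], ![0, 2, 3, 1], ![0, 3, 1, 2], ![0, 3, 2, 1],
   ![1, 0, 2, 3], ![1, 0, 3, 2], ![1, 2, 0, 3], ![1, 2, 3, 0], ![1, 3, 0, 2], ![1, 3, 2, 0],
   ![2, 0, 1, 3], ![2, 0, 3, 1], ![2, 1, 0, 3], ![2, 1, 3, 0], ![2, 3, 0, 1], ![2, 3, 1, 0],
   ![3, 0, 1, 2], ![3, 0, 2, 1], ![3, 1, 0, 2], ![3, 1, 2, 0], ![3, 2, 0, 1], ![3, 2, 1, 0]]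

/-- Permutations fixing the last coordinate. -/
def perms3 : List (Fin 4 → Fin 4) :=
  [![0, 1, 2, 3], ![0, 2, 1, 3], ![1, 0, 2, 3], ![1, 2, 0, 3], ![2, 0, 1, 3], ![2, 1, 0, 3]]

def signs : List (Fin 4 → ZMod 4) :=
  [![1, 1, 1, 1], ![1, 1, 1, 3], ![1, 1, 3, 1], ![1, 1, 3, 3],
   ![1, 3, 1, 1], ![1, 3, 1, 3], ![1, 3, 3, 1], ![1, 3, 3, 3]]

def G1 : List Mon := perms4.flatMap fun s => signs.map fun d => (s, d)

def GF : List Mon := perms4.map fun s => (s, ![1, 1, 1, 1])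

def GC : List Mon := perms3.flatMap fun s => [(s, ![1, 1, 1, 1]), (s, ![1, 1, 1, 3])]

/-- Index of the fifth point. -/
def psi1 (_ : Fin 4) (x : ZMod 4) : ℕ := if x = 0 then 1 else if x = 2 then 16 else 0

def al (x : ZMod 4) : ℕ := if x = 0 then 0 else if x = 1 then 1 else if x = 2 then 5 else 25

def psiF (_ : Fin 4) (x : ZMod 4) : ℕ := al x

def psiC (i : Fin 4) (x : ZMod 4) : ℕ :=
  if i = 3 then (if x = 0 then 0 else if x = 2 then 250 else 125) else al x

def basis4 : List Vec := [![1, 0, 0, 0], ![0, 1, 0, 0], ![0, 0, 1, 0], ![0, 0, 0, 1]]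

def reps1 : List Vec :=
  [![1, 1, 1, 1], ![1, 1, 1, 0], ![1, 1, 1, 2], ![1, 1, 0, 0], ![1, 1, 0, 2], ![1, 1, 2, 2],
   ![1, 0, 0, 0], ![1, 0, 0, 2], ![1, 0, 2, 2], ![1, 2, 2, 2]]

def keys1 : List ℕ := [0, 1, 16, 2, 17, 32, 3, 18, 33, 48]

def idx1 : Vec → ℕ := idx psi1 keys1

/-- Sixth points next to `(1,1,1,1)`. -/
def repsA : List Vec :=
  [![0, 0, 1, 2], ![0, 1, 2, 2], ![0, 1, 1, 2], ![0, 1, 2, 3], ![0, 1, 1, 3], ![1, 1, 2, 3],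
   ![0, 0, 1, 1], ![0, 0, 1, 3], ![1, 1, 2, 2], ![1, 2, 2, 3], ![0, 0, 0, 1], ![1, 2, 2, 2],
   ![0, 1, 1, 1], ![1, 1, 1, 2], ![1, 1, 1, 3], ![1, 1, 3, 3], ![1, 1, 1, 1]]

def keysA : List ℕ := [6, 11, 7, 31, 27, 32, 2, 26, 12, 36, 1, 16, 3, 8, 28, 52, 4]

/-- Sixth points next to `(1,1,1,0)`. -/
def repsB : List Vec :=
  [![0, 1, 2, 1], ![0, 1, 2, 0], ![0, 1, 2, 2], ![0, 0, 1, 1], ![1, 2, 2, 1], ![0, 1, 1, 1],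
   ![0, 1, 3, 1], ![1, 1, 2, 1], ![1, 2, 3, 1], ![0, 0, 1, 0], ![0, 0, 1, 2], ![0, 0, 2, 1],
   ![0, 2, 2, 1], ![1, 2, 2, 0], ![1, 2, 2, 2], ![0, 1, 1, 0], ![0, 1, 1, 2], ![0, 1, 3, 0],
   ![0, 1, 3, 2], ![1, 1, 2, 0], ![1, 1, 2, 2], ![1, 2, 3, 0], ![1, 2, 3, 2], ![1, 1, 3, 0],
   ![1, 1, 3, 2], ![0, 0, 0, 1], ![2, 2, 2, 1], ![1, 1, 1, 0], ![1, 1, 1, 2]]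

def keysB : List ℕ :=
  [131, 6, 256, 126, 136, 127, 151, 132, 156, 1, 251, 130, 135, 11, 261, 2, 252, 26, 276, 7, 257,
   31, 281, 27, 277, 125, 140, 3, 253]

/-- Sixth points next to `(1,1,1,2)`. -/
def repsC : List Vec :=
  [![0, 1, 2, 1], ![0, 1, 2, 0], ![0, 1, 2, 2], ![0, 0, 1, 1], ![1, 2, 2, 1], ![1, 1, 2, 1],
   ![1, 2, 3, 1], ![0, 0, 1, 0], ![0, 0, 1, 2], ![0, 0, 2, 1], ![0, 2, 2, 1], ![1, 2, 2, 0],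
   ![1, 2, 2, 2], ![0, 1, 1, 0], ![0, 1, 1, 2], ![0, 1, 3, 0], ![0, 1, 3, 2], ![1, 1, 2, 0],
   ![1, 1, 2, 2], ![1, 2, 3, 0], ![1, 2, 3, 2], ![1, 1, 3, 2], ![0, 0, 0, 1], ![2, 2, 2, 1],
   ![1, 1, 1, 2]]

def keysC : List ℕ :=
  [131, 6, 256, 126, 136, 132, 156, 1, 251, 130, 135, 11, 261, 2, 252, 26, 276, 7, 257, 31, 281,
   277, 125, 140, 253]

/-- Number the elements of a list. -/
def numb (l : List Vec) : List (ℕ × Vec) := l.zipIdx.map fun e => (e.2, e.1)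

theorem mem_numb (l : List Vec) (i : ℕ) (ρ : Vec) (h : l[i]? = some ρ) : (i, ρ) ∈ numb l := by
  unfold numb
  rw [List.mem_map]
  exact ⟨(ρ, i), List.mk_mem_zipIdx_iff_getElem?.2 h, rfl⟩

/-! ### The computations -/

theorem run1 : run basis4 (fun v => nrmB v && decide (3 ≤ idx1 v)) idx1
    ((numb reps1).drop 3) 6 = true := by decide +kernel

theorem runA : run (![1, 1, 1, 1] :: basis4) (fun v => nrmB v && decide (0 ≤ idx1 v))
    (idx psiF keysA) (numb repsA) 5 = true := by decide +kernel

theorem runB : run (![1, 1, 1, 0] :: basis4) (fun v => nrmB v && decide (1 ≤ idx1 v))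
    (idx psiC keysB) (numb repsB) 5 = true := by decide +kernel

theorem runC : run (![1, 1, 1, 2] :: basis4) (fun v => nrmB v && decide (2 ≤ idx1 v))
    (idx psiC keysC) (numb repsC) 5 = true := by decide +kernel

/-- Fast comparison of vectors. -/
def eqB (u v : Vec) : Bool :=
  and (Nat.beq (u 0).val (v 0).val) (and (Nat.beq (u 1).val (v 1).val)
    (and (Nat.beq (u 2).val (v 2).val) (Nat.beq (u 3).val (v 3).val)))

theorem eqB_eq (u v : Vec) (h : eqB u v = true) : u = v := by
  simp only [eqB, Bool.and_eq_true, Nat.beq_eq] at h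
  obtain ⟨h0, h1, h2, h3⟩ := h
  ext i
  fin_cases i
  · exact ZMod.val_injective 4 h0
  · exact ZMod.val_injective 4 h1
  · exact ZMod.val_injective 4 h2
  · exact ZMod.val_injective 4 h3

@[reducible] def beqVec : BEq Vec := ⟨eqB⟩

theorem lawfulVec : @LawfulBEq Vec beqVec :=
  @LawfulBEq.mk Vec beqVec (@ReflBEq.mk Vec beqVec (by
    intro v
    show eqB v v = true
    simp [eqB])) (by
    intro u v h
    exact eqB_eq u v h)

/-- Fast test of `OkMon`, of the invariance of `S` and of the invariance of the index. -/
def okB (S : List Vec) (ψ : Fin 4 → ZMod 4 → ℕ) (g : Mon) : Bool :=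
  decide (OkMon g) && (decide (∀ i x, ψ i (g.2 i * x) = ψ (g.1 i) x) &&
    @List.isPerm Vec beqVec (S.map fun v => nrmV (ap g v)) (S.map nrmV))

theorem okB_spec (S : List Vec) (ψ : Fin 4 → ZMod 4 → ℕ) (Gs : List Mon)
    (h : Gs.all (okB S ψ) = true) : ∀ g ∈ Gs, OkMon g ∧
      (S.map (fun v => nrmV (ap g v))).Perm (S.map nrmV) ∧
      ∀ i x, ψ i (g.2 i * x) = ψ (g.1 i) x := by
  intro g hg
  have := List.all_eq_true.1 h g hg
  simp only [okB, Bool.and_eq_true, decide_eq_true_iff] at this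
  exact ⟨this.1, (@List.isPerm_iff Vec beqVec lawfulVec _ _).1 this.2.2, this.2.1⟩

theorem okG1 : G1.all (okB basis4 psi1) = true := by decide +kernel

theorem okGA : GF.all (okB (![1, 1, 1, 1] :: basis4) psiF) = true := by decide +kernel

theorem okGB : GC.all (okB (![1, 1, 1, 0] :: basis4) psiC) = true := by decide +kernel

theorem okGC : GC.all (okB (![1, 1, 1, 2] :: basis4) psiC) = true := by decide +kernel

/-- Every vector is moved to its representative by one of the maps. -/
def covB (A : Vec → Bool) (ix : Vec → ℕ) (reps : List Vec) (Gs : List Mon) (v : Vec) : Bool :=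
  !decide (Un v) || !A v || (match reps[ix v]? with
    | none => false
    | some ρ => Gs.any fun g => eqB (ap g v) ρ || eqB (ap g v) (-ρ))

theorem nrmV_neg (v : Vec) : Un v → nrmV (-v) = nrmV v :=
  forall_vec (P := fun v => Un v → nrmV (-v) = nrmV v) (by decide +kernel) v

theorem covB_spec (A : Vec → Bool) (ix : Vec → ℕ) (reps : List Vec) (Gs : List Mon)
    (hG : ∀ g ∈ Gs, OkMon g)
    (h : ∀ a b c d : ZMod 4, covB A ix reps Gs ![a, b, c, d] = true) (v : Vec) (hv : Un v)
    (hA : A v = true) : ∃ g ∈ Gs, ∃ ρ, reps[ix v]? = some ρ ∧ nrmV (ap g v) = nrmV ρ := by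
  have h' := forall_vec (P := fun v => covB A ix reps Gs v = true) h v
  unfold covB at h'
  simp only [hv, hA, decide_true, Bool.not_true, Bool.false_or] at h'
  split at h'
  · exact absurd h' (by simp)
  · rename_i ρ hρ
    obtain ⟨g, hg, e⟩ := List.any_eq_true.1 h'
    refine ⟨g, hg, ρ, hρ, ?_⟩
    rcases Bool.or_eq_true _ _ ▸ e with e | e
    · rw [eqB_eq _ _ e]
    · rw [eqB_eq _ _ e]
      exact nrmV_neg ρ ((un_neg_iff ρ).1 (eqB_eq _ _ e ▸ un_ap g (hG g hg) v hv))

theorem cov1 : ∀ a b c d : ZMod 4, covB (fun _ => true) idx1 reps1 G1 ![a, b, c, d] = true := by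
  decide +kernel

theorem covA : ∀ a b c d : ZMod 4, covB (fun v => decide (0 ≤ idx1 v)) (idx psiF keysA) repsA GF
    ![a, b, c, d] = true := by
  decide +kernel

theorem covBB : ∀ a b c d : ZMod 4, covB (fun v => decide (1 ≤ idx1 v)) (idx psiC keysB) repsB GC
    ![a, b, c, d] = true := by
  decide +kernel

theorem covC : ∀ a b c d : ZMod 4, covB (fun v => decide (2 ≤ idx1 v)) (idx psiC keysC) repsC GC
    ![a, b, c, d] = true := by
  decide +kernel

/-! ### No arc contains the standard basis -/

theorem idx_neg (ψ : Fin 4 → ZMod 4 → ℕ) (keys : List ℕ) (v : Vec) :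
    idx ψ keys (-v) = idx ψ keys v := by
  unfold idx; rw [key_neg]

theorem idx_ap (ψ : Fin 4 → ZMod 4 → ℕ) (keys : List ℕ) (g : Mon) (hg : OkMon g)
    (h : ∀ i x, ψ i (g.2 i * x) = ψ (g.1 i) x) (v : Vec) :
    idx ψ keys (ap g v) = idx ψ keys v := by
  unfold idx; rw [key_ap ψ g hg h]

theorem psi1_sign : ∀ i j, ∀ x y : ZMod 4, (y = 1 ∨ y = 3) → psi1 i (y * x) = psi1 j x := by
  decide

theorem idx1_ap (g : Mon) (hg : OkMon g) (v : Vec) : idx1 (ap g v) = idx1 v :=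
  idx_ap _ _ g hg (fun i x => psi1_sign i (g.1 i) x _ (hg.2 i)) v

theorem idx1_neg (v : Vec) : idx1 (-v) = idx1 v := idx_neg _ _ v

/-- The second level of the search. -/
theorem level2 (c : ℕ) (S : List Vec) (ψ : Fin 4 → ZMod 4 → ℕ) (keys : List ℕ) (reps : List Vec)
    (Gs : List Mon) (hok : Gs.all (okB S ψ) = true)
    (hcov : ∀ a b e d : ZMod 4, covB (fun v => decide (c ≤ idx1 v)) (idx ψ keys) reps Gs
      ![a, b, e, d] = true)
    (hrun : run S (fun v => nrmB v && decide (c ≤ idx1 v)) (idx ψ keys) (numb reps) 5 = true)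
    (T : Multiset Vec) (hT : T.card = 6) (hTA : ∀ v ∈ T, c ≤ idx1 v) :
    ¬ Arc ((S : Multiset Vec) + T) := by
  have hG := okB_spec _ _ _ hok
  refine branch S (fun v => decide (c ≤ idx1 v)) (idx ψ keys) reps Gs 5 (fun g hg => (hG g hg).1)
    (fun g hg => (hG g hg).2.1) ?_ ?_ ?_ ?_ T hT (by simpa using hTA)
  · intro g hg v
    simp only [idx1_ap g (hG g hg).1]
  · intro g hg v
    exact idx_ap ψ keys g (hG g hg).1 (hG g hg).2.2 v
  · exact fun v hv hA => covB_spec _ _ _ _ (fun g hg => (hG g hg).1) hcov v hv hA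
  · intro i ρ hρ T hT hTA
    exact leaf S (fun v => decide (c ≤ idx1 v)) (idx ψ keys) (numb reps) 5
      (fun v => by simp only [idx1_neg]) (idx_neg ψ keys) hrun i ρ (mem_numb _ _ _ hρ) T hT hTA

theorem no_basis (T : Multiset Vec) (hT : T.card = 7) : ¬ Arc ((basis4 : Multiset Vec) + T) := by
  have hG := okB_spec _ _ _ okG1
  refine branch basis4 (fun _ => true) idx1 reps1 G1 6 (fun g hg => (hG g hg).1)
    (fun g hg => (hG g hg).2.1) (fun _ _ _ => rfl) ?_ ?_ ?_ T hT (fun _ _ => rfl)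
  · intro g hg v
    exact idx1_ap g (hG g hg).1 v
  · exact fun v hv hA => covB_spec _ _ _ _ (fun g hg => (hG g hg).1) cov1 v hv hA
  · intro i ρ hρ T hT hTA
    have e : (basis4 : Multiset Vec) + (ρ ::ₘ T) = ((ρ :: basis4 : List Vec) : Multiset Vec) + T := by
      rw [← Multiset.cons_coe, Multiset.cons_add, Multiset.add_cons]
    by_cases hi : 3 ≤ i
    · refine leaf basis4 (fun v => decide (3 ≤ idx1 v)) idx1 ((numb reps1).drop 3) 6
        (fun v => by simp only [idx1_neg]) idx1_neg run1 i ρ ?_ T hT ?_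
      · obtain ⟨k, rfl⟩ := Nat.exists_eq_add_of_le hi
        have h1 : k < 7 := by
          have := (List.getElem?_eq_some_iff.1 hρ).1
          simp [reps1] at this
          omega
        interval_cases k <;> simp [reps1] at hρ <;> subst hρ <;> simp [numb, reps1]
      · intro v hv
        have := (hTA v hv).2
        exact ⟨by simp only [decide_eq_true_iff]; omega, this⟩
    · rw [e]
      have h3 : i < 3 := by omega
      interval_cases i
      · obtain rfl : ![1, 1, 1, 1] = ρ := by simpa [reps1] using hρ
        exact level2 0 _ psiF keysA repsA GF okGA covA runA T hT (fun v hv => (hTA v hv).2)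
      · obtain rfl : ![1, 1, 1, 0] = ρ := by simpa [reps1] using hρ
        exact level2 1 _ psiC keysB repsB GC okGB covBB runB T hT (fun v hv => (hTA v hv).2)
      · obtain rfl : ![1, 1, 1, 2] = ρ := by simpa [reps1] using hρ
        exact level2 2 _ psiC keysC repsC GC okGC covC runC T hT (fun v hv => (hTA v hv).2)

/-! ### Finding a basis in an arc -/

abbrev red : ZMod 4 →+* ZMod 2 := ZMod.castHom (by norm_num) (ZMod 2)

theorem red_ne_zero : ∀ x : ZMod 4, red x ≠ 0 ↔ (x = 1 ∨ x = 3) := by decide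

theorem isUnit_iff4 (x : ZMod 4) : IsUnit x ↔ (x = 1 ∨ x = 3) := by
  revert x; decide

/-- Reduction of a vector. -/
def redV (v : Vec) : Fin 4 → ZMod 2 := fun i => red (v i)

/-- Lift of a vector. -/
def liftV (u : Fin 4 → ZMod 2) : Vec := fun i => if u i = 0 then 0 else 1

theorem redV_liftV (u : Fin 4 → ZMod 2) : redV (liftV u) = u := by
  ext i
  simp only [redV, liftV]
  generalize u i = x
  revert x; decide

/-- The eight hyperplanes over the hyperplane `u` of PG(3,2) (with repetitions). -/
theorem over_count (u : Fin 4 → ZMod 2) (hu : u ≠ 0) (v : Vec) (hv : Un v)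
    (h : ∑ i, u i * redV v i = 0) :
    ((Finset.univ : Finset (Fin 4 → ZMod 2)).filter
      (fun a => dotV (liftV u + 2 * liftV a) v = 0)).card = 8 := by
  obtain ⟨i, hi⟩ := hv
  have h0 : dotV (liftV u) v = 0 ∨ dotV (liftV u) v = 2 := by
    have e : red (dotV (liftV u) v) = 0 := by
      rw [dotV_sum, map_sum, ← h]
      apply Finset.sum_congr rfl
      intro j _
      rw [map_mul]
      congr 1
      exact congrFun (redV_liftV u) j
    generalize dotV (liftV u) v = x at e
    revert x; decide
  have hlin : ∀ a, dotV (liftV u + 2 * liftV a) v = dotV (liftV u) v + 2 * dotV (liftV a) v := by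
    intro a
    simp only [dotV, Pi.add_apply, Pi.mul_apply, Pi.ofNat_apply]
    ring
  have htog : ∀ a, 2 * dotV (liftV (a + Pi.single i 1)) v = 2 * dotV (liftV a) v + 2 := by
    intro a
    have e1 : ∀ j, 2 * liftV (a + Pi.single i 1) j = 2 * liftV a j + 2 * (Pi.single i 1 : Vec) j := by
      intro j
      let lf : ZMod 2 → ZMod 4 := fun x => if x = 0 then 0 else 1
      change 2 * lf (a j + (Pi.single i 1 : Fin 4 → ZMod 2) j) = 2 * lf (a j) + _
      by_cases hj : j = i
      · subst hj
        rw [Pi.single_eq_same, Pi.single_eq_same]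
        generalize a j = x
        revert x; decide
      · rw [Pi.single_eq_of_ne hj, Pi.single_eq_of_ne hj, add_zero, mul_zero, add_zero]
    have e2 : 2 * v i = 2 := by
      generalize v i = x at hi
      revert x; decide
    rw [dotV_sum, dotV_sum, Finset.mul_sum, Finset.mul_sum]
    have : ∀ j, 2 * (liftV (a + Pi.single i 1) j * v j)
        = 2 * (liftV a j * v j) + (Pi.single i 1 : Vec) j * (2 * v j) := by
      intro j
      rw [← mul_assoc, e1]; ring
    rw [Finset.sum_congr rfl (fun j _ => this j), Finset.sum_add_distrib]
    congr 1
    rw [Finset.sum_eq_single i]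
    · rw [Pi.single_eq_same, e2, one_mul]
    · intro j _ hj
      rw [Pi.single_eq_of_ne hj, zero_mul]
    · simp
  have hc : ((Finset.univ : Finset (Fin 4 → ZMod 2)).filter
      (fun a => dotV (liftV u + 2 * liftV a) v = 0)).card
      = ((Finset.univ : Finset (Fin 4 → ZMod 2)).filter
      (fun a => ¬ dotV (liftV u + 2 * liftV a) v = 0)).card := by
    apply Finset.card_equiv (Equiv.addRight (Pi.single i (1 : ZMod 2)))
    intro a
    simp only [Finset.mem_filter, Finset.mem_univ, true_and, Equiv.coe_addRight]
    rw [hlin, hlin, htog]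
    generalize dotV (liftV u) v = x at h0
    generalize dotV (liftV a) v = y
    revert x y; decide
  have ht := Finset.card_filter_add_card_filter_not (s := (Finset.univ : Finset (Fin 4 → ZMod 2)))
    (fun a => dotV (liftV u + 2 * liftV a) v = 0)
  have hu16 : (Finset.univ : Finset (Fin 4 → ZMod 2)).card = 16 := by
    rw [Finset.card_univ, Fintype.card_fun, ZMod.card, Fintype.card_fin]; norm_num
  rw [← hc, hu16] at ht
  omega

theorem not_in_plane (V : Multiset Vec) (hV : Arc V) (h11 : V.card = 11) (u : Fin 4 → ZMod 2)
    (hu : u ≠ 0) : ∃ v ∈ V, ∑ i, u i * redV v i ≠ 0 := by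
  by_contra hcon
  push Not at hcon
  have hw : ∀ a, Un (liftV u + 2 * liftV a) := by
    intro a
    obtain ⟨i, hi⟩ := Function.ne_iff.1 hu
    refine ⟨i, ?_⟩
    simp only [Pi.add_apply, Pi.mul_apply, liftV, Pi.ofNat_apply]
    have hi' : u i ≠ 0 := hi
    rw [if_neg hi']
    split_ifs <;> decide
  have h1 : ∑ a : Fin 4 → ZMod 2, V.countP (fun v => dotV (liftV u + 2 * liftV a) v = 0) ≤ 64 := by
    calc _ ≤ ∑ a : Fin 4 → ZMod 2, 4 := Finset.sum_le_sum (fun a _ => hV.2 _ (hw a))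
      _ = 64 := by simp
  have h2 : ∀ W : Multiset Vec, (∀ v ∈ W, Un v ∧ ∑ i, u i * redV v i = 0) →
      ∑ a : Fin 4 → ZMod 2, W.countP (fun v => dotV (liftV u + 2 * liftV a) v = 0)
        = 8 * W.card := by
    intro W
    induction W using Multiset.induction_on with
    | empty => simp
    | cons v W ih =>
      intro hW
      have := hW v (by simp)
      simp only [Multiset.countP_cons, Finset.sum_add_distrib, Multiset.card_cons]
      rw [ih (fun v hv => hW v (by simp [hv])), ← Finset.card_filter, over_count u hu v this.1 this.2]
      ring
  rw [h2 V (fun v hv => ⟨hV.1 v hv, hcon v hv⟩), h11] at h1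
  omega

theorem isUnit_det_of_red (B : Matrix (Fin 4) (Fin 4) (ZMod 4))
    (h : LinearIndependent (ZMod 2) (fun i => redV (B i))) : IsUnit B.det := by
  rw [isUnit_iff4, ← red_ne_zero, RingHom.map_det]
  have : LinearIndependent (ZMod 2) (red.mapMatrix B).row := h
  rw [Matrix.linearIndependent_rows_iff_isUnit, Matrix.isUnit_iff_isUnit_det] at this
  exact this.ne_zero

theorem dotV_eq (w v : Vec) : dotV w v = w ⬝ᵥ v := by
  rw [dotV_sum]; rfl

theorem un_of_red {v : Vec} (h : redV v ≠ 0) : Un v := by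
  obtain ⟨i, hi⟩ := Function.ne_iff.1 h
  exact ⟨i, (red_ne_zero _).1 hi⟩

/-- Invertible maps preserve unimodular vectors. -/
theorem un_mulVec (B C : Matrix (Fin 4) (Fin 4) (ZMod 4)) (h : C * B = 1) (v : Vec) (hv : Un v) :
    Un (B.mulVec v) := by
  by_contra hc
  have h0 : ∀ i, red (B.mulVec v i) = 0 := by
    intro i
    by_contra hi
    exact hc ⟨i, (red_ne_zero _).1 hi⟩
  obtain ⟨i, hi⟩ := hv
  have e : v i = (C.mulVec (B.mulVec v)) i := by rw [Matrix.mulVec_mulVec, h, Matrix.one_mulVec]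
  apply (red_ne_zero _).2 hi
  rw [e, Matrix.mulVec, dotProduct, map_sum]
  apply Finset.sum_eq_zero
  intro k _
  rw [map_mul, h0, mul_zero]

theorem exists_basis (V : Multiset Vec) (hV : Arc V) (h11 : V.card = 11) :
    ∃ B : Matrix (Fin 4) (Fin 4) (ZMod 4), (∀ i, B i ∈ V) ∧ IsUnit B.det := by
  let s : Set (Fin 4 → ZMod 2) := redV '' {v | v ∈ V}
  have hs : Submodule.span (ZMod 2) s = ⊤ := by
    by_contra hne
    obtain ⟨f, hf, hle⟩ := Submodule.exists_le_ker_of_lt_top _ (lt_top_iff_ne_top.2 hne)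
    let u : Fin 4 → ZMod 2 := fun i => f (Pi.single i 1)
    have hfu : ∀ x, f x = ∑ i, u i * x i := by
      intro x
      conv_lhs => rw [LinearMap.pi_apply_eq_sum_univ f x]
      apply Finset.sum_congr rfl
      intro i _
      rw [smul_eq_mul, mul_comm]
      congr 2
      ext j
      simp [Pi.single_apply, eq_comm]
    have hu : u ≠ 0 := by
      intro h0
      apply hf
      ext x
      simp [hfu, h0]
    obtain ⟨v, hv, h⟩ := not_in_plane V hV h11 u hu
    apply h
    rw [← hfu]
    exact hle (Submodule.subset_span ⟨v, hv, rfl⟩)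
  obtain ⟨b, hb, hspan, hli⟩ := exists_linearIndependent (ZMod 2) s
  rw [hs] at hspan
  let bas := Module.Basis.mk hli (by simpa using hspan.ge)
  haveI : Finite b := Set.toFinite b
  haveI := Fintype.ofFinite b
  have hcard : Fintype.card b = 4 := by
    have := Module.finrank_eq_card_basis bas
    simpa using this.symm
  let e : Fin 4 ≃ b := (Fintype.equivFinOfCardEq hcard).symm
  have hli' : LinearIndependent (ZMod 2) (fun i => ((e i : b) : Fin 4 → ZMod 2)) :=
    hli.comp e e.injective
  choose f hf using fun i => hb (e i).2
  refine ⟨f, fun i => (hf i).1, isUnit_det_of_red f ?_⟩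
  convert hli' using 2 with i
  exact (hf i).2

theorem no_arc (V : Multiset Vec) (hV : Arc V) (h11 : V.card = 11) : False := by
  obtain ⟨B, hB, hdet⟩ := exists_basis V hV h11
  have h1 : B * B⁻¹ = 1 := Matrix.mul_nonsing_inv B hdet
  have h2 : B⁻¹ * B = 1 := Matrix.nonsing_inv_mul B hdet
  let f : Vec → Vec := fun v => B⁻¹.transpose.mulVec v
  have hA : Arc (V.map f) := hV.map f
    (un_mulVec _ B.transpose (by rw [← Matrix.transpose_mul, h2, Matrix.transpose_one]))
    (by
      intro w hw
      refine ⟨B⁻¹.mulVec w, un_mulVec _ B h1 w hw, fun v => ?_⟩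
      rw [dotV_eq, dotV_eq, Matrix.dotProduct_mulVec, Matrix.vecMul_transpose])
  have hf : ∀ i, f (B i) = Pi.single i 1 := by
    intro i
    show B⁻¹.transpose.mulVec (B i) = _
    rw [Matrix.mulVec_transpose]
    have : B i = Matrix.vecMul (Pi.single i 1) B := by
      rw [Matrix.single_one_vecMul]; rfl
    rw [this, Matrix.vecMul_vecMul, h1, Matrix.vecMul_one]
  have hle : (basis4 : Multiset Vec) ≤ V.map f := by
    rw [Multiset.le_iff_subset (by simp only [Multiset.coe_nodup]; decide)]
    intro x hx
    have hx' : ∃ i, x = Pi.single i 1 := by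
      simp only [basis4, Multiset.mem_coe, List.mem_cons, List.not_mem_nil, or_false] at hx
      rcases hx with rfl | rfl | rfl | rfl
      · exact ⟨0, by decide⟩
      · exact ⟨1, by decide⟩
      · exact ⟨2, by decide⟩
      · exact ⟨3, by decide⟩
    obtain ⟨i, rfl⟩ := hx'
    rw [← hf i]
    exact Multiset.mem_map_of_mem f (hB i)
  obtain ⟨T, hT⟩ := Multiset.le_iff_exists_add.1 hle
  refine no_basis T ?_ (hT ▸ hA)
  have := congrArg Multiset.card hT
  simp [basis4, h11] at this
  omega


/-! ### Hyperplanes as kernels -/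

/-- The linear form given by `w`. -/
def formV (w : Vec) : Vec →ₗ[R4] R4 where
  toFun v := dotV w v
  map_add' x y := by simp only [dotV, Pi.add_apply]; ring
  map_smul' c x := by simp only [dotV, Pi.smul_apply, smul_eq_mul, RingHom.id_apply]; ring

theorem span_le_ker (w v : Vec) :
    Submodule.span R4 {v} ≤ LinearMap.ker (formV w) ↔ dotV w v = 0 := by
  rw [Submodule.span_singleton_le_iff_mem, LinearMap.mem_ker]; rfl

theorem sq_unit : ∀ x : ZMod 4, (x = 1 ∨ x = 3) → x * x = 1 := by decide

theorem ker_isHyperplane (w : Vec) (hw : Un w) :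
    IsHyperplane (LinearMap.ker (formV w)) := by
  obtain ⟨i, hi⟩ := hw
  have hsq := sq_unit _ hi
  have hdot : ∀ v, formV w v = w i * v i + ∑ j : Fin 3, w (i.succAbove j) * v (i.succAbove j) := by
    intro v
    change dotV w v = _
    rw [dotV_sum, Fin.sum_univ_succAbove _ i]
  refine ⟨LinearEquiv.symm (LinearEquiv.ofBijective
    ((LinearMap.funLeft R4 R4 i.succAbove).comp (LinearMap.ker (formV w)).subtype) ⟨?_, ?_⟩)⟩
  · rw [← LinearMap.ker_eq_bot, LinearMap.ker_eq_bot']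
    rintro ⟨v, hv⟩ h
    have h' : ∀ j, v (i.succAbove j) = 0 := fun j => congrFun h j
    rw [LinearMap.mem_ker, hdot] at hv
    simp only [h', mul_zero, Finset.sum_const_zero, add_zero] at hv
    have hvi : v i = 0 := by
      have := congrArg (fun t => w i * t) hv
      simpa [← mul_assoc, hsq] using this
    apply Subtype.ext
    funext k
    rcases Fin.eq_self_or_eq_succAbove i k with rfl | ⟨j, rfl⟩
    · exact hvi
    · exact h' j
  · intro u
    refine ⟨⟨Fin.insertNth i (-(w i) * ∑ j : Fin 3, w (i.succAbove j) * u j) u, ?_⟩, ?_⟩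
    · rw [LinearMap.mem_ker, hdot]
      simp only [Fin.insertNth_apply_same, Fin.insertNth_apply_succAbove]
      rw [← mul_assoc, mul_neg, hsq]; ring
    · funext j
      simp [LinearMap.funLeft]

/-- Every hyperplane lies in the kernel of a unimodular form. -/
theorem exists_form (H : Submodule R4 Vec) (hH : IsHyperplane H) :
    ∃ w, Un w ∧ H ≤ LinearMap.ker (formV w) := by
  obtain ⟨φ⟩ := hH
  let h : Fin 3 → Vec := fun i => (φ (Pi.single i 1) : Vec)
  have hsum : ∀ c : Fin 3 → ZMod 4, (φ c : Vec) = ∑ i, c i • h i := by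
    intro c
    have : c = ∑ i, c i • (Pi.single i 1 : Fin 3 → ZMod 4) := by
      ext j; simp [Finset.sum_apply, Pi.single_apply]
    conv_lhs => rw [this]
    rw [map_sum]
    simp only [map_smul, Submodule.coe_sum, Submodule.coe_smul]
    rfl
  have hli : LinearIndependent (ZMod 2) (fun i => redV (h i)) := by
    rw [Fintype.linearIndependent_iff]
    intro g hg
    let c : Fin 3 → ZMod 4 := fun i => if g i = 0 then 0 else 1
    have hc : ∀ i, red (c i) = g i := by
      intro i
      simp only [c]
      generalize g i = x
      revert x; decide
    have h2 : ((φ ((2 : R4) • c) : H) : Vec) = 0 := by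
      rw [map_smul, Submodule.coe_smul, hsum]
      ext j
      have := congrFun hg j
      simp only [Finset.sum_apply, Pi.smul_apply, smul_eq_mul, redV, Pi.zero_apply] at this
      have hr : red (∑ i, c i * h i j) = 0 := by
        rw [map_sum, ← this]
        apply Finset.sum_congr rfl
        intro i _
        rw [map_mul, hc]
      simp only [Finset.sum_apply, Pi.smul_apply, smul_eq_mul, Pi.zero_apply]
      generalize (∑ i, c i * h i j) = x at hr
      revert x; decide
    have h3 : (2 : R4) • c = 0 := by
      apply φ.injective
      rw [map_zero]
      exact Subtype.ext h2
    intro i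
    rw [← hc]
    have := congrFun h3 i
    simp only [Pi.smul_apply, smul_eq_mul, Pi.zero_apply] at this
    generalize c i = x at this
    revert x; decide
  obtain ⟨e, he⟩ : ∃ e, e ∉ Submodule.span (ZMod 2) (Set.range (fun i => redV (h i))) := by
    by_contra hcon
    push Not at hcon
    have h1 := finrank_span_eq_card hli
    rw [(Submodule.eq_top_iff').2 hcon] at h1
    simp at h1
  let B : Matrix (Fin 4) (Fin 4) (ZMod 4) := Fin.cons (liftV e) h
  have hB : IsUnit B.det := by
    apply isUnit_det_of_red
    have : (fun i => redV (B i)) = Fin.cons e (fun i => redV (h i)) := by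
      funext i
      refine Fin.cases ?_ (fun j => ?_) i
      · exact redV_liftV e
      · rfl
    rw [this, linearIndependent_finCons]
    exact ⟨hli, he⟩
  have h1 : B * B⁻¹ = 1 := Matrix.mul_nonsing_inv B hB
  let w : Vec := fun k => B⁻¹ k 0
  have hw : ∀ i, dotV w (B i) = (1 : Matrix (Fin 4) (Fin 4) (ZMod 4)) i 0 := by
    intro i
    rw [← h1, Matrix.mul_apply, dotV_sum]
    apply Finset.sum_congr rfl
    intro k _
    exact mul_comm _ _
  refine ⟨w, ?_, ?_⟩
  · by_contra hc
    have h0 : ∀ i, red (w i) = 0 := by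
      intro i
      by_contra hi
      exact hc ⟨i, (red_ne_zero _).1 hi⟩
    have := congrArg red (hw 0)
    rw [dotV_sum, map_sum, Finset.sum_eq_zero] at this
    · simp at this
    · intro k _
      rw [map_mul, h0, zero_mul]
  · intro x hx
    have : x = ∑ i, (φ.symm ⟨x, hx⟩) i • h i := by
      rw [← hsum]; simp
    rw [LinearMap.mem_ker, this, map_sum]
    apply Finset.sum_eq_zero
    intro i _
    rw [map_smul]
    have := hw i.succ
    rw [Matrix.one_apply_ne (Fin.succ_ne_zero i)] at this
    change _ • dotV w (B i.succ) = 0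
    rw [this, smul_zero]

/-- A 4-arc with ten points. -/
def arc10 : List Vec :=
  [![0, 0, 0, 1], ![0, 0, 1, 0], ![0, 1, 0, 0], ![1, 0, 0, 0], ![0, 1, 2, 1], ![1, 3, 3, 3],
    ![2, 1, 1, 2], ![2, 1, 2, 0], ![1, 3, 0, 2], ![1, 0, 1, 1]]

theorem arc10_un : ∀ v ∈ arc10, Un v := by decide +kernel

theorem arc10_le (w : Vec) : Un w → arc10.countP (fun v => decide (dotV w v = 0)) ≤ 4 :=
  forall_vec (P := fun w => Un w → arc10.countP (fun v => decide (dotV w v = 0)) ≤ 4)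
    (by decide +kernel) w

theorem isPoint_iff (P : Submodule R4 Vec) :
    IsPoint P ↔ ∃ v, Un v ∧ Submodule.span R4 {v} = P := by
  constructor
  · rintro ⟨v, ⟨i, hi⟩, h⟩
    exact ⟨v, ⟨i, (isUnit_iff4 _).1 hi⟩, h.symm⟩
  · rintro ⟨v, ⟨i, hi⟩, h⟩
    exact ⟨v, ⟨i, (isUnit_iff4 _).2 hi⟩, h.symm⟩

theorem exists_vectors (M : Multiset (Submodule R4 Vec)) (hM : ∀ P ∈ M, IsPoint P) :
    ∃ V : Multiset Vec, (∀ v ∈ V, Un v) ∧ V.map (fun v => Submodule.span R4 {v}) = M := by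
  induction M using Multiset.induction_on with
  | empty => exact ⟨0, by simp, by simp⟩
  | cons P M ih =>
    obtain ⟨V, h1, h2⟩ := ih (fun Q hQ => hM Q (Multiset.mem_cons_of_mem hQ))
    obtain ⟨v, hv, hP⟩ := (isPoint_iff P).1 (hM P (Multiset.mem_cons_self P M))
    refine ⟨v ::ₘ V, ?_, by rw [Multiset.map_cons, h2, hP]⟩
    intro x hx
    rcases Multiset.mem_cons.1 hx with rfl | hx
    · exact hv
    · exact h1 x hx

theorem card_filter_le (V : Multiset Vec) (p q : Vec → Prop) [DecidablePred p] [DecidablePred q]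
    (h : ∀ v, p v → q v) : (V.filter p).card ≤ (V.filter q).card :=
  Multiset.card_le_card (Multiset.monotone_filter_right V h)

end Helpers

attribute [local instance] Classical.propDecidable

/-- Every multiset of 11 points of PHG(3, ℤ/4ℤ) has a hyperplane containing at least
5 of its points counted with multiplicity; so the maximum size of a 4-arc in
PHG(3, ℤ/4ℤ) is 10 (which is strictly smaller than the value 11 attained over
𝔽₂[X]/(X²)). -/
theorem max_four_arc_Z4_dim3 :
    (∀ M : Multiset (Submodule R4 (Fin 4 → R4)), (∀ P ∈ M, IsPoint P) →
      Multiset.card M = 11 →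
      ∃ H : Submodule R4 (Fin 4 → R4), IsHyperplane H ∧
        5 ≤ Multiset.card (M.filter fun P => P ≤ H)) ∧
    (∃ M : Multiset (Submodule R4 (Fin 4 → R4)), (∀ P ∈ M, IsPoint P) ∧
      Multiset.card M = 10 ∧
      ∀ H : Submodule R4 (Fin 4 → R4), IsHyperplane H →
        Multiset.card (M.filter fun P => P ≤ H) ≤ 4) := by
  constructor
  · intro M hM h11
    by_contra hcon
    push Not at hcon
    obtain ⟨V, hV, rfl⟩ := exists_vectors M hM
    rw [Multiset.card_map] at h11
    refine no_arc V ⟨hV, fun w hw => ?_⟩ h11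
    have := hcon _ (ker_isHyperplane w hw)
    rw [Multiset.filter_map, Multiset.card_map, ← Multiset.countP_eq_card_filter] at this
    refine le_trans ?_ (Nat.le_of_lt_succ this)
    simp only [Multiset.countP_eq_card_filter]
    apply card_filter_le
    intro v hv
    exact (span_le_ker w v).2 hv
  · refine ⟨(arc10 : Multiset Vec).map (fun v => Submodule.span R4 {v}), ?_, ?_, ?_⟩
    · intro P hP
      obtain ⟨v, hv, rfl⟩ := Multiset.mem_map.1 hP
      exact (isPoint_iff _).2 ⟨v, arc10_un v hv, rfl⟩
    · rw [Multiset.card_map]; rfl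
    · intro H hH
      obtain ⟨w, hw, hle⟩ := exists_form H hH
      refine le_trans ?_ (arc10_le w hw)
      rw [← Multiset.coe_countP, Multiset.filter_map, Multiset.card_map,
        Multiset.countP_eq_card_filter]
      apply card_filter_le
      intro v hv
      exact (span_le_ker w v).1 (le_trans hv hle)
end
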